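/- arXiv:2603.18269 — 3 statements merged into one kernel-verified Lean document; each statement's English description precedes it below -/
import Mathlib

section
/- Let M and N be two classical solutions of the initial-boundary value problem Σ_{τ,τ'}, i.e. 4-tuples of real functions that are continuous on 𝒫, possess all first-order partial derivatives on the interior of 𝒫, and satisfy the Broadwell system together with the initial and boundary conditions. Then M = N. -/
open Set MeasureTheory

noncomputable section

/-- The Broadwell collision term `Q(N) = 2cS (N₂N₃ - N₁N₄)` (indexing `N₁ = M 0`, …). -/
def QQ (c S : ℝ) (M : Fin 4 → ℝ → ℝ → ℝ → ℝ) (t x y : ℝ) : ℝ :=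
  2 * c * S * (M 1 t x y * M 2 t x y - M 0 t x y * M 3 t x y)

/-- Signs of `Q` in the four Broadwell equations. -/
def sgn4 : Fin 4 → ℝ := ![1, -1, -1, 1]

/-- `x`-components of the four velocities. -/
def spX (c : ℝ) : Fin 4 → ℝ := ![c, 0, 0, -c]

/-- `y`-components of the four velocities. -/
def spY (c : ℝ) : Fin 4 → ℝ := ![0, c, -c, 0]

/-- Partial derivative in `t`. -/
def pdtF (f : ℝ → ℝ → ℝ → ℝ) (t x y : ℝ) : ℝ := deriv (fun s => f s x y) t

/-- Partial derivative in `x`. -/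
def pdxF (f : ℝ → ℝ → ℝ → ℝ) (t x y : ℝ) : ℝ := deriv (fun s => f t s y) x

/-- Partial derivative in `y`. -/
def pdyF (f : ℝ → ℝ → ℝ → ℝ) (t x y : ℝ) : ℝ := deriv (fun s => f t x s) y

/-- `f` possesses all three first-order partial derivatives at `p`. -/
def HasPartials (f : ℝ → ℝ → ℝ → ℝ) (p : ℝ × ℝ × ℝ) : Prop :=
  DifferentiableAt ℝ (fun s => f s p.2.1 p.2.2) p.1 ∧
  DifferentiableAt ℝ (fun s => f p.1 s p.2.2) p.2.1 ∧
  DifferentiableAt ℝ (fun s => f p.1 p.2.1 s) p.2.2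

/-- Continuity of a curried function of three real variables on a set. -/
def Cont3 (f : ℝ → ℝ → ℝ → ℝ) (D : Set (ℝ × ℝ × ℝ)) : Prop :=
  ContinuousOn (fun p : ℝ × ℝ × ℝ => f p.1 p.2.1 p.2.2) D

/-- Sup norm over `D` of a function of three variables. -/
def supNorm3 (D : Set (ℝ × ℝ × ℝ)) (f : ℝ → ℝ → ℝ → ℝ) : ℝ :=
  sSup ((fun p : ℝ × ℝ × ℝ => |f p.1 p.2.1 p.2.2|) '' D)

/-- `‖N‖ = max_i ‖N_i‖_∞` over `D`. -/
def norm4 (D : Set (ℝ × ℝ × ℝ)) (M : Fin 4 → ℝ → ℝ → ℝ → ℝ) : ℝ :=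
  max (max (supNorm3 D (M 0)) (supNorm3 D (M 1))) (max (supNorm3 D (M 2)) (supNorm3 D (M 3)))

/-- Sup norm over `D` of a function of two variables. -/
def supNorm2 (D : Set (ℝ × ℝ)) (f : ℝ → ℝ → ℝ) : ℝ :=
  sSup ((fun p : ℝ × ℝ => |f p.1 p.2|) '' D)

/-- `‖g‖₁` for a function of two variables: max of the sup norms of `g` and its two
first-order partial derivatives over `D`. -/
def norm1Two (D : Set (ℝ × ℝ)) (f : ℝ → ℝ → ℝ) : ℝ :=
  max (supNorm2 D f)
    (max (supNorm2 D (fun a b => deriv (fun u => f u b) a))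
      (supNorm2 D (fun a b => deriv (fun v => f a v) b)))

/-- The space-time slab `T × [a₁,b₁] × [a₂,b₂]`. -/
def PsetT (T : Set ℝ) (a₁ b₁ a₂ b₂ : ℝ) : Set (ℝ × ℝ × ℝ) := T ×ˢ Icc a₁ b₁ ×ˢ Icc a₂ b₂

/-- The spatial rectangle `[a₁,b₁] × [a₂,b₂]`. -/
def Rect2 (a₁ b₁ a₂ b₂ : ℝ) : Set (ℝ × ℝ) := Icc a₁ b₁ ×ˢ Icc a₂ b₂

/-- A function of two variables which is continuous and bounded on `D` with continuous
and bounded first-order partial derivatives on `D`. -/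
def Smooth2 (D : Set (ℝ × ℝ)) (f : ℝ → ℝ → ℝ) : Prop :=
  ContinuousOn (fun p : ℝ × ℝ => f p.1 p.2) D ∧
  (∀ p ∈ D, DifferentiableAt ℝ (fun u => f u p.2) p.1 ∧
    DifferentiableAt ℝ (fun v => f p.1 v) p.2) ∧
  ContinuousOn (fun p : ℝ × ℝ => deriv (fun u => f u p.2) p.1) D ∧
  ContinuousOn (fun p : ℝ × ℝ => deriv (fun v => f p.1 v) p.2) D ∧
  ∃ C, ∀ p ∈ D, |f p.1 p.2| ≤ C ∧
    |deriv (fun u => f u p.2) p.1| ≤ C ∧ |deriv (fun v => f p.1 v) p.2| ≤ C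

/-- Nonnegativity of a function of two variables on `D`. -/
def Nonneg2 (D : Set (ℝ × ℝ)) (f : ℝ → ℝ → ℝ) : Prop := ∀ p ∈ D, 0 ≤ f p.1 p.2

/-- The initial data `N0` and boundary data `B1, B2, B3, B4` are nonnegative, continuous
and bounded with continuous bounded first-order partial derivatives, and satisfy the
compatibility conditions at time `t0`. -/
def NiceData (T : Set ℝ) (t0 a₁ b₁ a₂ b₂ : ℝ) (N0 : Fin 4 → ℝ → ℝ → ℝ)
    (B1 B2 B3 B4 : ℝ → ℝ → ℝ) : Prop :=
  (∀ i, Smooth2 (Rect2 a₁ b₁ a₂ b₂) (N0 i) ∧ Nonneg2 (Rect2 a₁ b₁ a₂ b₂) (N0 i)) ∧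
  (Smooth2 (T ×ˢ Icc a₂ b₂) B1 ∧ Nonneg2 (T ×ˢ Icc a₂ b₂) B1) ∧
  (Smooth2 (T ×ˢ Icc a₁ b₁) B2 ∧ Nonneg2 (T ×ˢ Icc a₁ b₁) B2) ∧
  (Smooth2 (T ×ˢ Icc a₁ b₁) B3 ∧ Nonneg2 (T ×ˢ Icc a₁ b₁) B3) ∧
  (Smooth2 (T ×ˢ Icc a₂ b₂) B4 ∧ Nonneg2 (T ×ˢ Icc a₂ b₂) B4) ∧
  (∀ y ∈ Icc a₂ b₂, N0 0 a₁ y = B1 t0 y) ∧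
  (∀ x ∈ Icc a₁ b₁, N0 1 x a₂ = B2 t0 x) ∧
  (∀ x ∈ Icc a₁ b₁, N0 2 x b₂ = B3 t0 x) ∧
  (∀ y ∈ Icc a₂ b₂, N0 3 b₁ y = B4 t0 y)

/-- `N` is a classical solution of the initial-boundary value problem for the planar
four-velocity Broadwell model on `T × [a₁,b₁] × [a₂,b₂]`, with initial time `t0`,
initial data `N0` and boundary data `B1, B2, B3, B4`. -/
def IsSol (c S : ℝ) (T : Set ℝ) (t0 a₁ b₁ a₂ b₂ : ℝ) (N0 : Fin 4 → ℝ → ℝ → ℝ)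
    (B1 B2 B3 B4 : ℝ → ℝ → ℝ) (N : Fin 4 → ℝ → ℝ → ℝ → ℝ) : Prop :=
  (∀ i, Cont3 (N i) (PsetT T a₁ b₁ a₂ b₂)) ∧
  (∀ i, ∀ p ∈ interior (PsetT T a₁ b₁ a₂ b₂), HasPartials (N i) p) ∧
  (∀ i, ∀ p ∈ interior (PsetT T a₁ b₁ a₂ b₂),
    pdtF (N i) p.1 p.2.1 p.2.2 + spX c i * pdxF (N i) p.1 p.2.1 p.2.2 +
      spY c i * pdyF (N i) p.1 p.2.1 p.2.2 = sgn4 i * QQ c S N p.1 p.2.1 p.2.2) ∧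
  (∀ i, ∀ x ∈ Icc a₁ b₁, ∀ y ∈ Icc a₂ b₂, N i t0 x y = N0 i x y) ∧
  (∀ t ∈ T, ∀ y ∈ Icc a₂ b₂, N 0 t a₁ y = B1 t y) ∧
  (∀ t ∈ T, ∀ x ∈ Icc a₁ b₁, N 1 t x a₂ = B2 t x) ∧
  (∀ t ∈ T, ∀ x ∈ Icc a₁ b₁, N 2 t x b₂ = B3 t x) ∧
  (∀ t ∈ T, ∀ y ∈ Icc a₂ b₂, N 3 t b₁ y = B4 t y)

/-- The operator `𝒯`, defined by integration along the characteristics. -/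
def Tcal (c S τ a₁ b₁ a₂ b₂ : ℝ) (N0 : Fin 4 → ℝ → ℝ → ℝ) (B1 B2 B3 B4 : ℝ → ℝ → ℝ)
    (M : Fin 4 → ℝ → ℝ → ℝ → ℝ) : Fin 4 → ℝ → ℝ → ℝ → ℝ :=
  ![fun t x y =>
      if a₁ ≤ x - c * (t - τ) then
        (∫ s in τ..t, QQ c S M s (x + c * (s - t)) y) + N0 0 (x - c * (t - τ)) y
      else
        (∫ s in (t - (x - a₁) / c)..t, QQ c S M s (x + c * (s - t)) y) +
          B1 (t - (x - a₁) / c) y,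
    fun t x y =>
      if a₂ ≤ y - c * (t - τ) then
        (∫ s in τ..t, -QQ c S M s x (y + c * (s - t))) + N0 1 x (y - c * (t - τ))
      else
        (∫ s in (t - (y - a₂) / c)..t, -QQ c S M s x (y + c * (s - t))) +
          B2 (t - (y - a₂) / c) x,
    fun t x y =>
      if y + c * (t - τ) ≤ b₂ then
        (∫ s in τ..t, -QQ c S M s x (y - c * (s - t))) + N0 2 x (y + c * (t - τ))
      else
        (∫ s in (t - (b₂ - y) / c)..t, -QQ c S M s x (y - c * (s - t))) +
          B3 (t - (b₂ - y) / c) x,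
    fun t x y =>
      if x + c * (t - τ) ≤ b₁ then
        (∫ s in τ..t, QQ c S M s (x - c * (s - t)) y) + N0 3 (x + c * (t - τ)) y
      else
        (∫ s in (t - (b₁ - x) / c)..t, QQ c S M s (x - c * (s - t)) y) +
          B4 (t - (b₁ - x) / c) y]

/-- `ρ(|M|) = |M₁| + |M₂| + |M₃| + |M₄|`. -/
def rhoA (M : Fin 4 → ℝ → ℝ → ℝ → ℝ) (t x y : ℝ) : ℝ :=
  |M 0 t x y| + |M 1 t x y| + |M 2 t x y| + |M 3 t x y|

/-- `Q(|M|)`. -/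
def QQa (c S : ℝ) (M : Fin 4 → ℝ → ℝ → ℝ → ℝ) (t x y : ℝ) : ℝ :=
  2 * c * S * (|M 1 t x y| * |M 2 t x y| - |M 0 t x y| * |M 3 t x y|)

/-- `Q_i^σ(|M|) = σ ρ(|M|) |M_i| ± Q(|M|)`. -/
def Qsig (c S σ : ℝ) (i : Fin 4) (M : Fin 4 → ℝ → ℝ → ℝ → ℝ) (t x y : ℝ) : ℝ :=
  σ * rhoA M t x y * |M i t x y| + sgn4 i * QQa c S M t x y

/-- Duhamel formula with integrating factor along the `i`-th characteristic, starting at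
time `t0` with datum `datum`. -/
def duh (c S σ : ℝ) (i : Fin 4) (M : Fin 4 → ℝ → ℝ → ℝ → ℝ) (t0 t x y datum : ℝ) : ℝ :=
  ((∫ s in t0..t,
      Real.exp (σ * ∫ r in t0..s,
        rhoA M r (x + spX c i * (r - t)) (y + spY c i * (r - t))) *
        Qsig c S σ i M s (x + spX c i * (s - t)) (y + spY c i * (s - t))) + datum) *
    Real.exp (-(σ * ∫ s in t0..t, rhoA M s (x + spX c i * (s - t)) (y + spY c i * (s - t))))

/-- The operator `𝒯^σ`. -/
def Tsig (c S σ τ a₁ b₁ a₂ b₂ : ℝ) (N0 : Fin 4 → ℝ → ℝ → ℝ) (B1 B2 B3 B4 : ℝ → ℝ → ℝ)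
    (M : Fin 4 → ℝ → ℝ → ℝ → ℝ) : Fin 4 → ℝ → ℝ → ℝ → ℝ :=
  ![fun t x y =>
      if a₁ ≤ x - c * (t - τ) then duh c S σ 0 M τ t x y (N0 0 (x - c * (t - τ)) y)
      else duh c S σ 0 M (t - (x - a₁) / c) t x y (B1 (t - (x - a₁) / c) y),
    fun t x y =>
      if a₂ ≤ y - c * (t - τ) then duh c S σ 1 M τ t x y (N0 1 x (y - c * (t - τ)))
      else duh c S σ 1 M (t - (y - a₂) / c) t x y (B2 (t - (y - a₂) / c) x),
    fun t x y =>
      if y + c * (t - τ) ≤ b₂ then duh c S σ 2 M τ t x y (N0 2 x (y + c * (t - τ)))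
      else duh c S σ 2 M (t - (b₂ - y) / c) t x y (B3 (t - (b₂ - y) / c) x),
    fun t x y =>
      if x + c * (t - τ) ≤ b₁ then duh c S σ 3 M τ t x y (N0 3 (x + c * (t - τ)) y)
      else duh c S σ 3 M (t - (b₁ - x) / c) t x y (B4 (t - (b₁ - x) / c) y)]

/-- Complement of the four exceptional planes. -/
def offPlanes (c τ a₁ b₁ a₂ b₂ : ℝ) : Set (ℝ × ℝ × ℝ) :=
  {p | p.2.1 - c * (p.1 - τ) ≠ a₁ ∧ p.2.2 - c * (p.1 - τ) ≠ a₂ ∧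
    p.2.2 + c * (p.1 - τ) ≠ b₂ ∧ p.2.1 + c * (p.1 - τ) ≠ b₁}

/-- The interior of `𝒫` minus the four exceptional planes. -/
def Dset (c τ τ' a₁ b₁ a₂ b₂ : ℝ) : Set (ℝ × ℝ × ℝ) :=
  (Ioo τ τ' ×ˢ Ioo a₁ b₁ ×ˢ Ioo a₂ b₂) ∩ offPlanes c τ a₁ b₁ a₂ b₂

/-- `u` has first-order partial derivatives on `D`, continuous and bounded there. -/
def DerivReg (D : Set (ℝ × ℝ × ℝ)) (u : ℝ → ℝ → ℝ → ℝ) : Prop :=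
  (∀ p ∈ D, HasPartials u p) ∧
  Cont3 (pdtF u) D ∧ Cont3 (pdxF u) D ∧ Cont3 (pdyF u) D ∧
  ∃ C, ∀ p ∈ D, |pdtF u p.1 p.2.1 p.2.2| ≤ C ∧
    |pdxF u p.1 p.2.1 p.2.2| ≤ C ∧ |pdyF u p.1 p.2.1 p.2.2| ≤ C

/-- Membership in the space `E`: continuity on `𝒫` plus regularity of the first-order
partial derivatives off the four exceptional planes. -/
def memE (c τ τ' a₁ b₁ a₂ b₂ : ℝ) (u : ℝ → ℝ → ℝ → ℝ) : Prop :=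
  Cont3 u (PsetT (Icc τ τ') a₁ b₁ a₂ b₂) ∧ DerivReg (Dset c τ τ' a₁ b₁ a₂ b₂) u

/-- `‖u‖₁`: the max of the sup norm of `u` over `P` and of the sup norms of its
first-order partial derivatives over `D`. -/
def norm1E (P D : Set (ℝ × ℝ × ℝ)) (u : ℝ → ℝ → ℝ → ℝ) : ℝ :=
  max (supNorm3 P u)
    (max (supNorm3 D (pdtF u)) (max (supNorm3 D (pdxF u)) (supNorm3 D (pdyF u))))

/-- `𝒩(N) = max_i ‖N_i‖₁`. -/
def NN4 (P D : Set (ℝ × ℝ × ℝ)) (N : Fin 4 → ℝ → ℝ → ℝ → ℝ) : ℝ :=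
  max (max (norm1E P D (N 0)) (norm1E P D (N 1)))
    (max (norm1E P D (N 2)) (norm1E P D (N 3)))

/-- The convex set `𝓜_R = {N ∈ E⁴ : 𝒩(N) ≤ R}`. -/
def MR (c τ τ' a₁ b₁ a₂ b₂ R : ℝ) : Set (Fin 4 → ℝ → ℝ → ℝ → ℝ) :=
  {N | (∀ i, memE c τ τ' a₁ b₁ a₂ b₂ (N i)) ∧
    NN4 (PsetT (Icc τ τ') a₁ b₁ a₂ b₂) (Dset c τ τ' a₁ b₁ a₂ b₂) N ≤ R}

/-- The transported initial datum `N̄_i^τ`. -/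
def barN0 (c τ : ℝ) (N0 : Fin 4 → ℝ → ℝ → ℝ) (i : Fin 4) : ℝ → ℝ → ℝ → ℝ :=
  fun t x y => N0 i (x - spX c i * (t - τ)) (y - spY c i * (t - τ))

/-- The transported boundary data `N̄₁⁻, N̄₂⁻, N̄₃⁺, N̄₄⁺`. -/
def barB (c a₁ b₁ a₂ b₂ : ℝ) (B1 B2 B3 B4 : ℝ → ℝ → ℝ) : Fin 4 → ℝ → ℝ → ℝ → ℝ :=
  ![fun t x y => B1 (t - (x - a₁) / c) y,
    fun t x y => B2 (t - (y - a₂) / c) x,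
    fun t x y => B3 (t - (b₂ - y) / c) x,
    fun t x y => B4 (t - (b₁ - x) / c) y]

/-- Domain of definition of the transported initial datum `N̄_i^τ` inside `𝒫`. -/
def domBar0 (c τ a₁ b₁ a₂ b₂ : ℝ) (T : Set ℝ) (i : Fin 4) : Set (ℝ × ℝ × ℝ) :=
  PsetT T a₁ b₁ a₂ b₂ ∩
    {p | (p.2.1 - spX c i * (p.1 - τ), p.2.2 - spY c i * (p.1 - τ)) ∈ Rect2 a₁ b₁ a₂ b₂}

/-- Domains of definition of the transported boundary data inside `𝒫`. -/
def domBarB (c a₁ b₁ a₂ b₂ : ℝ) (T : Set ℝ) : Fin 4 → Set (ℝ × ℝ × ℝ) :=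
  ![PsetT T a₁ b₁ a₂ b₂ ∩ {p | p.1 - (p.2.1 - a₁) / c ∈ T},
    PsetT T a₁ b₁ a₂ b₂ ∩ {p | p.1 - (p.2.2 - a₂) / c ∈ T},
    PsetT T a₁ b₁ a₂ b₂ ∩ {p | p.1 - (b₂ - p.2.2) / c ∈ T},
    PsetT T a₁ b₁ a₂ b₂ ∩ {p | p.1 - (b₁ - p.2.1) / c ∈ T}]

/-- `‖N̄_i^τ‖₁`. -/
def nb0 (c τ a₁ b₁ a₂ b₂ : ℝ) (T : Set ℝ) (N0 : Fin 4 → ℝ → ℝ → ℝ) (i : Fin 4) : ℝ :=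
  norm1E (domBar0 c τ a₁ b₁ a₂ b₂ T i) (domBar0 c τ a₁ b₁ a₂ b₂ T i) (barN0 c τ N0 i)

/-- `‖N̄₁⁻‖₁`, `‖N̄₂⁻‖₁`, `‖N̄₃⁺‖₁`, `‖N̄₄⁺‖₁`. -/
def nbB (c a₁ b₁ a₂ b₂ : ℝ) (T : Set ℝ) (B1 B2 B3 B4 : ℝ → ℝ → ℝ) (i : Fin 4) : ℝ :=
  norm1E (domBarB c a₁ b₁ a₂ b₂ T i) (domBarB c a₁ b₁ a₂ b₂ T i)
    (barB c a₁ b₁ a₂ b₂ B1 B2 B3 B4 i)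

/-- `q`: the max of the `‖·‖₁` norms of the eight transported data functions. -/
def qval (c τ a₁ b₁ a₂ b₂ : ℝ) (T : Set ℝ) (N0 : Fin 4 → ℝ → ℝ → ℝ)
    (B1 B2 B3 B4 : ℝ → ℝ → ℝ) : ℝ :=
  max
    (max (max (nb0 c τ a₁ b₁ a₂ b₂ T N0 0) (nb0 c τ a₁ b₁ a₂ b₂ T N0 1))
      (max (nb0 c τ a₁ b₁ a₂ b₂ T N0 2) (nb0 c τ a₁ b₁ a₂ b₂ T N0 3)))
    (max (max (nbB c a₁ b₁ a₂ b₂ T B1 B2 B3 B4 0) (nbB c a₁ b₁ a₂ b₂ T B1 B2 B3 B4 1))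
      (max (nbB c a₁ b₁ a₂ b₂ T B1 B2 B3 B4 2) (nbB c a₁ b₁ a₂ b₂ T B1 B2 B3 B4 3)))

/-- `μ = 8 + 4/c + 8c`. -/
def muc (c : ℝ) : ℝ := 8 + 4 / c + 8 * c

/-- `λ = 16 + 16c`. -/
def lamc (c : ℝ) : ℝ := 16 + 16 * c

/-- `δ = 4/c + 8 + 4c`. -/
def delc (c : ℝ) : ℝ := 4 / c + 8 + 4 * c

/-- `γ = 1 + c + 1/c`. -/
def gamc (c : ℝ) : ℝ := 1 + c + 1 / c

/-- `p_σ = (μ + λ σ R₀ (τ'-τ))(σ + cS)`. -/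
def psig (c S σ R₀ τ τ' : ℝ) : ℝ := (muc c + lamc c * σ * R₀ * (τ' - τ)) * (σ + c * S)

/-- `q_σ = q (1 + δ σ R₀)`. -/
def qsig (c σ R₀ q : ℝ) : ℝ := q * (1 + delc c * σ * R₀)

/-- `max_i ‖N_i‖₁` for a solution: sup norms of the `N_i` over `Dom`, and of their
first-order partial derivatives over the interior of `Dom`. -/
def NNSol (Dom : Set (ℝ × ℝ × ℝ)) (N : Fin 4 → ℝ → ℝ → ℝ → ℝ) : ℝ :=
  NN4 Dom (interior Dom) N

/-!
All first-order partial derivatives exist, but the solutions need not be differentiable along the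
characteristics, so the equations cannot be integrated directly. A maximum principle replaces
integration. Let `v · ∇u + λ u ≤ λ A` in the interior of a box, with `λ > 0`. For `z₀` in the
interior, maximize `u` over the box spanned by `z₀` and the upstream corner, keeping every
coordinate with `v j = 0` fixed. At a maximum point off the inflow boundary each `v j * ∂ⱼu` is
nonnegative, so `u ≤ A` there, hence also at `z₀`. Time is treated as one more coordinate, with
velocity `1`. For the difference `w` of two solutions of a locally Lipschitz system, apply this to
`± exp (-λ t) * w k`: for large `λ` the maximum `m` of `exp (-λ t) * ‖w‖` satisfies `m ≤ m / 2`.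
-/

section Box

variable {ι : Type*} {a b v z : ι → ℝ}

/-- The inflow boundary of the box `[a, b]` for the constant velocity `v`: the union of the faces
through which `v` points into the box. -/
def inflow (a b v : ι → ℝ) : Set (ι → ℝ) :=
  {z ∈ Icc a b | ∃ j, 0 < v j ∧ z j = a j ∨ v j < 0 ∧ z j = b j}

/-- The vertex opposite to `z` of its domain of dependence in `[a, b]`: the box obtained by moving
from `z` against `v`, coordinate by coordinate, up to the inflow faces. Coordinates with zero
velocity are kept. -/
def upstreamCorner (a b v z : ι → ℝ) (j : ι) : ℝ :=
  if 0 < v j then a j else if v j < 0 then b j else z j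

lemma upstreamCorner_mem_Icc (hz : z ∈ Icc a b) : upstreamCorner a b v z ∈ Icc a b := by
  have hab (j : ι) : a j ≤ b j := (hz.1 j).trans (hz.2 j)
  constructor <;> intro j <;> unfold upstreamCorner <;> split_ifs
  exacts [le_rfl, hab j, hz.1 j, hab j, le_rfl, hz.2 j]

lemma mem_interior_Icc_pi [Finite ι] :
    z ∈ interior (Icc a b) ↔ ∀ j, z j ∈ Ioo (a j) (b j) := by
  simp only [← pi_univ_Icc, interior_pi_set finite_univ, interior_Icc, mem_univ_pi]

lemma closure_interior_Icc_pi [Finite ι] (hab : ∀ j, a j < b j) :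
    closure (interior (Icc a b)) = Icc a b := by
  simp only [← pi_univ_Icc, interior_pi_set finite_univ, interior_Icc, closure_pi_set,
    closure_Ioo (hab _).ne]

lemma mem_Ioo_of_mem_uIcc_upstreamCorner {z₀ : ι → ℝ} {j : ι} (hz₀ : z₀ j ∈ Ioo (a j) (b j))
    (hz : z j ∈ uIcc (upstreamCorner a b v z₀ j) (z₀ j))
    (ha : 0 < v j → z j ≠ a j) (hb : v j < 0 → z j ≠ b j) : z j ∈ Ioo (a j) (b j) := by
  obtain ⟨hz₀a, hz₀b⟩ := hz₀
  unfold upstreamCorner at hz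
  rcases lt_trichotomy (v j) 0 with hv | hv | hv
  · rw [if_neg hv.not_gt, if_pos hv, uIcc_of_ge hz₀b.le] at hz
    exact ⟨hz₀a.trans_le hz.1, hz.2.lt_of_ne (hb hv)⟩
  · rw [if_neg hv.not_gt, if_neg hv.not_lt, uIcc_self, mem_singleton_iff] at hz
    exact hz ▸ ⟨hz₀a, hz₀b⟩
  · rw [if_pos hv, uIcc_of_le hz₀a.le] at hz
    exact ⟨hz.1.lt_of_ne' (ha hv), hz.2.trans_lt hz₀b⟩

end Box

section PartialDeriv

variable {ι : Type*} [DecidableEq ι] {u w : (ι → ℝ) → ℝ} {u' w' e z z₀ : ι → ℝ}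

/-- All first-order partial derivatives of `u` exist at `z`, and `u' j` is the `j`-th one. No
total differentiability is implied. -/
def HasPartialDerivsAt (u : (ι → ℝ) → ℝ) (u' z : ι → ℝ) : Prop :=
  ∀ j, HasDerivAt (fun s => u (Function.update z j s)) (u' j) (z j)

lemma HasPartialDerivsAt.neg (hu : HasPartialDerivsAt u u' z) :
    HasPartialDerivsAt (-u) (-u') z :=
  fun j => (hu j).neg

lemma HasPartialDerivsAt.sub (hu : HasPartialDerivsAt u u' z) (hw : HasPartialDerivsAt w w' z) :
    HasPartialDerivsAt (u - w) (u' - w') z :=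
  fun j => (hu j).sub (hw j)

lemma HasPartialDerivsAt.exp_mul (hw : HasPartialDerivsAt w w' z) (lam : ℝ) (o : ι) :
    HasPartialDerivsAt (fun x => Real.exp (-(lam * x o)) * w x)
      (fun j => Real.exp (-(lam * z o)) * (w' j - lam * (Pi.single j 1 : ι → ℝ) o * w z)) z := by
  intro j
  have hcoord :
      HasDerivAt (fun s => Function.update z j s o) ((Pi.single j 1 : ι → ℝ) o) (z j) := by
    rcases eq_or_ne o j with rfl | hoj
    · simpa using hasDerivAt_id' (z o)
    · simpa [hoj] using hasDerivAt_const (z j) (z o)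
  refine ((hcoord.const_mul lam).fun_neg.exp.mul (hw j)).congr_deriv ?_
  rw [Function.update_eq_self]
  ring

lemma sum_mul_exp_partialDerivs_add [Fintype ι] {v : ι → ℝ} {o : ι} (hv : v o = 1) (lam E W : ℝ) :
    ∑ j, v j * (E * (w' j - lam * (Pi.single j 1 : ι → ℝ) o * W)) + lam * (E * W) =
      E * ∑ j, v j * w' j := by
  have hsingle : ∑ j, v j * (Pi.single j 1 : ι → ℝ) o = 1 := by
    simp [Pi.single_apply, hv]
  calc _ = E * ∑ j, v j * w' j - lam * (E * W) * ∑ j, v j * (Pi.single j 1 : ι → ℝ) o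
          + lam * (E * W) := by
        rw [Finset.mul_sum, Finset.mul_sum, ← Finset.sum_sub_distrib]
        congr 1
        exact Finset.sum_congr rfl fun j _ => by ring
    _ = _ := by rw [hsingle]; ring

lemma mul_sub_nonneg_of_isMaxOn_uIcc {f : ℝ → ℝ} {f' r s : ℝ} (hf : HasDerivAt f f' s)
    (hmax : IsMaxOn f (uIcc r s) s) : 0 ≤ f' * (s - r) := by
  have hcone : r - s ∈ posTangentConeAt (uIcc r s) s :=
    sub_mem_posTangentConeAt_of_segment_subset (by rw [segment_eq_uIcc, uIcc_comm])
  have hle := hmax.localize.hasFDerivWithinAt_nonpos hf.hasFDerivAt.hasFDerivWithinAt hcone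
  simp only [ContinuousLinearMap.toSpanSingleton_apply, smul_eq_mul] at hle
  linarith

lemma HasPartialDerivsAt.mul_sub_nonneg_of_isMaxOn_uIcc (hu : HasPartialDerivsAt u u' z)
    (hz : z ∈ uIcc e z₀) (hmax : IsMaxOn u (uIcc e z₀) z) (j : ι) :
    0 ≤ u' j * (z j - e j) := by
  refine _root_.mul_sub_nonneg_of_isMaxOn_uIcc (hu j) fun s hs => ?_
  rw [mem_ofPred_eq, Function.update_eq_self]
  refine hmax ?_
  rw [← pi_univ_uIcc, mem_univ_pi] at hz ⊢
  intro k
  rcases eq_or_ne k j with rfl | hkj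
  · rw [Function.update_self]
    exact uIcc_subset_uIcc_left (hz k) hs
  · rw [Function.update_of_ne hkj]
    exact hz k

lemma HasPartialDerivsAt.mul_nonneg_of_isMaxOn_uIcc_upstreamCorner {a b v : ι → ℝ}
    (hu : HasPartialDerivsAt u u' z) (hz : z ∈ uIcc (upstreamCorner a b v z₀) z₀)
    (hmax : IsMaxOn u (uIcc (upstreamCorner a b v z₀) z₀) z) {j : ι}
    (hzj : z j ∈ Ioo (a j) (b j)) : 0 ≤ v j * u' j := by
  have hnonneg := hu.mul_sub_nonneg_of_isMaxOn_uIcc hz hmax j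
  unfold upstreamCorner at hnonneg
  rcases lt_trichotomy (v j) 0 with hv | hv | hv
  · rw [if_neg hv.not_gt, if_pos hv] at hnonneg
    exact mul_nonneg_of_nonpos_of_nonpos hv.le
      (nonpos_of_mul_nonneg_left hnonneg (sub_neg.2 hzj.2))
  · rw [hv, zero_mul]
  · rw [if_pos hv] at hnonneg
    exact mul_nonneg hv.le (nonneg_of_mul_nonneg_left hnonneg (sub_pos.2 hzj.1))

end PartialDeriv

section MaximumPrinciple

variable {ι : Type*} [Fintype ι] [DecidableEq ι] {a b v : ι → ℝ} {u : (ι → ℝ) → ℝ} {lam A : ℝ}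

lemma le_of_transport_le_of_mem_interior (hlam : 0 < lam) (hcont : ContinuousOn u (Icc a b))
    (hint : ∀ z ∈ interior (Icc a b), ∃ u', HasPartialDerivsAt u u' z ∧
      ∑ j, v j * u' j + lam * u z ≤ lam * A)
    (hin : ∀ z ∈ inflow a b v, u z ≤ A) {z₀ : ι → ℝ} (hz₀ : z₀ ∈ interior (Icc a b)) :
    u z₀ ≤ A := by
  have hsub : uIcc (upstreamCorner a b v z₀) z₀ ⊆ Icc a b :=
    uIcc_subset_Icc (upstreamCorner_mem_Icc (interior_subset hz₀)) (interior_subset hz₀)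
  have hcompact : IsCompact (uIcc (upstreamCorner a b v z₀) z₀) := isCompact_Icc
  obtain ⟨z, hz, hmax⟩ := hcompact.exists_isMaxOn nonempty_uIcc (hcont.mono hsub)
  refine (hmax right_mem_uIcc).trans ?_
  by_cases hzin : z ∈ inflow a b v
  · exact hin z hzin
  have hface (j : ι) : ¬(0 < v j ∧ z j = a j ∨ v j < 0 ∧ z j = b j) :=
    fun h => hzin ⟨hsub hz, j, h⟩
  have hzint (j : ι) : z j ∈ Ioo (a j) (b j) :=
    mem_Ioo_of_mem_uIcc_upstreamCorner (mem_interior_Icc_pi.1 hz₀ j)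
      ((pi_univ_uIcc _ _).ge hz j trivial)
      (fun hv h => hface j (.inl ⟨hv, h⟩)) (fun hv h => hface j (.inr ⟨hv, h⟩))
  obtain ⟨u', hu', hle⟩ := hint z (mem_interior_Icc_pi.2 hzint)
  have hsum : 0 ≤ ∑ j, v j * u' j := Finset.sum_nonneg fun j _ =>
    hu'.mul_nonneg_of_isMaxOn_uIcc_upstreamCorner hz hmax (hzint j)
  exact le_of_mul_le_mul_left (by linarith) hlam

theorem le_of_transport_le (hab : ∀ j, a j < b j) (hlam : 0 < lam)
    (hcont : ContinuousOn u (Icc a b))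
    (hint : ∀ z ∈ interior (Icc a b), ∃ u', HasPartialDerivsAt u u' z ∧
      ∑ j, v j * u' j + lam * u z ≤ lam * A)
    (hin : ∀ z ∈ inflow a b v, u z ≤ A) {z : ι → ℝ} (hz : z ∈ Icc a b) : u z ≤ A := by
  rw [← closure_interior_Icc_pi hab] at hz
  exact le_on_closure (fun z₀ hz₀ => le_of_transport_le_of_mem_interior hlam hcont hint hin hz₀)
    (hcont.mono (closure_interior_Icc_pi hab).le) continuousOn_const hz

theorem abs_le_of_abs_transport_le (hab : ∀ j, a j < b j) (hlam : 0 < lam)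
    (hcont : ContinuousOn u (Icc a b))
    (hint : ∀ z ∈ interior (Icc a b), ∃ u', HasPartialDerivsAt u u' z ∧
      |∑ j, v j * u' j + lam * u z| ≤ lam * A)
    (hin : ∀ z ∈ inflow a b v, |u z| ≤ A) {z : ι → ℝ} (hz : z ∈ Icc a b) : |u z| ≤ A := by
  refine abs_le'.2 ⟨le_of_transport_le hab hlam hcont (fun z hz => ?_)
    (fun z hz => (abs_le'.1 (hin z hz)).1) hz, le_of_transport_le (u := -u) hab hlam hcont.neg
    (fun z hz => ?_) (fun z hz => (abs_le'.1 (hin z hz)).2) hz⟩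
  all_goals obtain ⟨u', hu', habs⟩ := hint z hz
  · exact ⟨u', hu', (le_abs_self _).trans habs⟩
  · refine ⟨-u', hu'.neg, le_trans (le_of_eq ?_) ((neg_le_abs _).trans habs)⟩
    simp only [Pi.neg_apply, mul_neg, Finset.sum_neg_distrib, neg_add]

end MaximumPrinciple

section Uniqueness

variable {ι κ : Type*} [Fintype ι] [DecidableEq ι] [Fintype κ] {a b : ι → ℝ} {v : κ → ι → ℝ}
  {o : ι}

lemma norm_exp_smul_le_half {w : (ι → ℝ) → κ → ℝ} {L lam m : ℝ} (hab : ∀ j, a j < b j)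
    (hv : ∀ k, v k o = 1) (hcont : ContinuousOn w (Icc a b))
    (hint : ∀ z ∈ interior (Icc a b), ∀ k, ∃ w', HasPartialDerivsAt (fun x => w x k) w' z ∧
      |∑ j, v k j * w' j| ≤ L * ‖w z‖)
    (hin : ∀ k, ∀ z ∈ inflow a b (v k), w z k = 0) (hlam : 0 < lam) (hL : 2 * |L| ≤ lam)
    (hm : ∀ z ∈ Icc a b, ‖Real.exp (-(lam * z o)) • w z‖ ≤ m) {z : ι → ℝ} (hz : z ∈ Icc a b) :
    ‖Real.exp (-(lam * z o)) • w z‖ ≤ m / 2 := by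
  have hm0 : 0 ≤ m := (norm_nonneg _).trans (hm z hz)
  refine (pi_norm_le_iff_of_nonneg (by positivity)).2 fun k => ?_
  refine abs_le_of_abs_transport_le (u := fun x => Real.exp (-(lam * x o)) * w x k)
    (v := v k) hab hlam ?_ (fun x hx => ?_) (fun x hx => ?_) hz
  · have hk : ContinuousOn (fun x => w x k) (Icc a b) := continuousOn_pi.1 hcont k
    fun_prop
  · obtain ⟨w', hw', hle⟩ := hint x hx k
    refine ⟨_, hw'.exp_mul lam o, ?_⟩
    rw [sum_mul_exp_partialDerivs_add (hv k), abs_mul, Real.abs_exp]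
    have hmx := hm x (interior_subset hx)
    rw [norm_smul, Real.norm_eq_abs, Real.abs_exp] at hmx
    calc Real.exp (-(lam * x o)) * |∑ j, v k j * w' j|
        ≤ Real.exp (-(lam * x o)) * (|L| * ‖w x‖) := by
          gcongr
          exact hle.trans (by gcongr; exact le_abs_self L)
      _ = |L| * (Real.exp (-(lam * x o)) * ‖w x‖) := by ring
      _ ≤ |L| * m := by gcongr
      _ ≤ lam * (m / 2) := by nlinarith
  · rw [hin k x hx, mul_zero, abs_zero]
    positivity

theorem eqOn_zero_of_abs_transport_le {w : (ι → ℝ) → κ → ℝ} {L : ℝ} (hab : ∀ j, a j < b j)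
    (hv : ∀ k, v k o = 1) (hcont : ContinuousOn w (Icc a b))
    (hint : ∀ z ∈ interior (Icc a b), ∀ k, ∃ w', HasPartialDerivsAt (fun x => w x k) w' z ∧
      |∑ j, v k j * w' j| ≤ L * ‖w z‖)
    (hin : ∀ k, ∀ z ∈ inflow a b (v k), w z k = 0) : EqOn w 0 (Icc a b) := by
  intro z hz
  set lam : ℝ := 2 * |L| + 1
  have hlam : 0 < lam := by positivity
  have hcont' : ContinuousOn (fun x => ‖Real.exp (-(lam * x o)) • w x‖) (Icc a b) := by fun_prop
  obtain ⟨zmax, hzmax, hmax⟩ := isCompact_Icc.exists_isMaxOn ⟨z, hz⟩ hcont'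
  have hhalf := norm_exp_smul_le_half hab hv hcont hint hin hlam (lt_add_one _).le
    (fun x hx => hmax hx) hzmax
  have hzero : ‖Real.exp (-(lam * z o)) • w z‖ ≤ 0 := (hmax hz).trans (by linarith)
  exact (smul_eq_zero.1 (norm_le_zero_iff.1 hzero)).resolve_left (Real.exp_ne_zero _)

/-- A classical solution on the box `[a, b]` of the semilinear transport system
`v k · ∇(M k) = G k (M)`. Initial and boundary values are not part of the notion. If one of the
coordinates is time, its velocity is `1` for every `k`. -/
structure IsClassicalSolution (a b : ι → ℝ) (v : κ → ι → ℝ) (G : (κ → ℝ) → κ → ℝ)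
    (M : (ι → ℝ) → κ → ℝ) : Prop where
  continuousOn : ContinuousOn M (Icc a b)
  transport : ∀ z ∈ interior (Icc a b), ∀ k, ∃ m', HasPartialDerivsAt (fun x => M x k) m' z ∧
    ∑ j, v k j * m' j = G (M z) k

theorem IsClassicalSolution.eqOn {G : (κ → ℝ) → κ → ℝ} {M N : (ι → ℝ) → κ → ℝ}
    (hM : IsClassicalSolution a b v G M) (hN : IsClassicalSolution a b v G N)
    (hG : LocallyLipschitz G) (hab : ∀ j, a j < b j) (hv : ∀ k, v k o = 1)
    (hin : ∀ k, ∀ z ∈ inflow a b (v k), M z k = N z k) : EqOn M N (Icc a b) := by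
  obtain ⟨L, hL⟩ := hG.locallyLipschitzOn.exists_lipschitzOnWith_of_compact
    ((isCompact_Icc.image_of_continuousOn hM.continuousOn).union
      (isCompact_Icc.image_of_continuousOn hN.continuousOn))
  have hzero : EqOn (M - N) 0 (Icc a b) := by
    refine eqOn_zero_of_abs_transport_le (L := L) hab hv (hM.continuousOn.sub hN.continuousOn)
      (fun z hz k => ?_) (fun k z hz => sub_eq_zero.2 (hin k z hz))
    obtain ⟨m', hm', hMk⟩ := hM.transport z hz k
    obtain ⟨n', hn', hNk⟩ := hN.transport z hz k
    refine ⟨m' - n', hm'.sub hn', ?_⟩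
    calc |∑ j, v k j * (m' - n') j| = |G (M z) k - G (N z) k| := by
          simp only [Pi.sub_apply, mul_sub, Finset.sum_sub_distrib, hMk, hNk]
      _ ≤ ‖G (M z) - G (N z)‖ := norm_le_pi_norm (G (M z) - G (N z)) k
      _ ≤ L * ‖M z - N z‖ := hL.norm_sub_le
          (.inl (mem_image_of_mem M (interior_subset hz)))
          (.inr (mem_image_of_mem N (interior_subset hz)))
  exact fun z hz => sub_eq_zero.1 (hzero hz)

end Uniqueness

section Broadwell

variable {c S τ τ' a₁ b₁ a₂ b₂ : ℝ} {N0 : Fin 4 → ℝ → ℝ → ℝ} {B1 B2 B3 B4 : ℝ → ℝ → ℝ}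
  {M N : Fin 4 → ℝ → ℝ → ℝ → ℝ}

/-- The space-time velocities `(1, v_x, v_y)` of the Broadwell model. -/
def broadwellVelocity (c : ℝ) (i : Fin 4) : Fin 3 → ℝ := ![1, spX c i, spY c i]

/-- The right-hand sides `±Q` of the four Broadwell equations, as a function of the densities. -/
def broadwellCollision (c S : ℝ) (m : Fin 4 → ℝ) (i : Fin 4) : ℝ :=
  sgn4 i * (2 * c * S * (m 1 * m 2 - m 0 * m 3))

/-- The densities `M` as a single vector-valued function of the point `(t, x, y)`. -/
def densityVector (M : Fin 4 → ℝ → ℝ → ℝ → ℝ) (z : Fin 3 → ℝ) (i : Fin 4) : ℝ :=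
  M i (z 0) (z 1) (z 2)

lemma locallyLipschitz_broadwellCollision (c S : ℝ) : LocallyLipschitz (broadwellCollision c S) :=
  ContDiff.locallyLipschitz (𝕂 := ℝ) (by unfold broadwellCollision; fun_prop)

lemma mem_Icc_vec3_iff {z : Fin 3 → ℝ} :
    z ∈ Icc ![τ, a₁, a₂] ![τ', b₁, b₂] ↔ (z 0, z 1, z 2) ∈ PsetT (Icc τ τ') a₁ b₁ a₂ b₂ := by
  simp only [← pi_univ_Icc, mem_univ_pi, Fin.forall_fin_succ, PsetT, mem_prod]
  simp

lemma mem_interior_Icc_vec3_iff {z : Fin 3 → ℝ} :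
    z ∈ interior (Icc ![τ, a₁, a₂] ![τ', b₁, b₂]) ↔
      (z 0, z 1, z 2) ∈ interior (PsetT (Icc τ τ') a₁ b₁ a₂ b₂) := by
  simp only [PsetT, interior_prod_eq, interior_Icc, mem_prod, mem_interior_Icc_pi,
    Fin.forall_fin_succ]
  simp

lemma HasPartials.hasPartialDerivsAt {f : ℝ → ℝ → ℝ → ℝ} {z : Fin 3 → ℝ}
    (hf : HasPartials f (z 0, z 1, z 2)) :
    HasPartialDerivsAt (fun x => f (x 0) (x 1) (x 2))
      ![pdtF f (z 0) (z 1) (z 2), pdxF f (z 0) (z 1) (z 2), pdyF f (z 0) (z 1) (z 2)] z := by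
  obtain ⟨ht, hx, hy⟩ := hf
  intro j
  fin_cases j
  · simpa [pdtF] using ht
  · simpa [pdxF] using hx
  · simpa [pdyF] using hy

lemma IsSol.isClassicalSolution
    (hM : IsSol c S (Icc τ τ') τ a₁ b₁ a₂ b₂ N0 B1 B2 B3 B4 M) :
    IsClassicalSolution ![τ, a₁, a₂] ![τ', b₁, b₂] (broadwellVelocity c)
      (broadwellCollision c S) (densityVector M) := by
  obtain ⟨hcont, hpart, heq, -⟩ := hM
  refine ⟨continuousOn_pi.2 fun i => ?_, fun z hz i => ?_⟩
  · have hcoord : Continuous fun z : Fin 3 → ℝ => (z 0, z 1, z 2) := by fun_prop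
    exact (hcont i).comp hcoord.continuousOn fun z hz => mem_Icc_vec3_iff.1 hz
  · rw [mem_interior_Icc_vec3_iff] at hz
    refine ⟨_, (hpart i _ hz).hasPartialDerivsAt, Eq.trans ?_ (heq i _ hz)⟩
    simp [broadwellVelocity, Fin.sum_univ_three]

lemma eq_of_mem_inflow_broadwellVelocity (hc : 0 ≤ c) {i : Fin 4} {z : Fin 3 → ℝ}
    (hz : z ∈ inflow ![τ, a₁, a₂] ![τ', b₁, b₂] (broadwellVelocity c i)) :
    z 0 = τ ∨ i = 0 ∧ z 1 = a₁ ∨ i = 1 ∧ z 2 = a₂ ∨ i = 2 ∧ z 2 = b₂ ∨ i = 3 ∧ z 1 = b₁ := by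
  obtain ⟨-, j, hj⟩ := hz
  fin_cases j <;> fin_cases i <;>
    simp_all [broadwellVelocity, spX, spY, hc.not_gt, zero_lt_one.not_gt]

lemma IsSol.densityVector_eq_of_mem_inflow (hc : 0 ≤ c)
    (hM : IsSol c S (Icc τ τ') τ a₁ b₁ a₂ b₂ N0 B1 B2 B3 B4 M)
    (hN : IsSol c S (Icc τ τ') τ a₁ b₁ a₂ b₂ N0 B1 B2 B3 B4 N) {i : Fin 4} {z : Fin 3 → ℝ}
    (hz : z ∈ inflow ![τ, a₁, a₂] ![τ', b₁, b₂] (broadwellVelocity c i)) :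
    densityVector M z i = densityVector N z i := by
  obtain ⟨-, -, -, hM0, hM1, hM2, hM3, hM4⟩ := hM
  obtain ⟨-, -, -, hN0, hN1, hN2, hN3, hN4⟩ := hN
  obtain ⟨ht, hx, hy⟩ := mem_Icc_vec3_iff.1 hz.1
  unfold densityVector
  rcases eq_of_mem_inflow_broadwellVelocity hc hz with
    h | ⟨rfl, h⟩ | ⟨rfl, h⟩ | ⟨rfl, h⟩ | ⟨rfl, h⟩ <;> rw [h]
  · rw [hM0 i _ hx _ hy, hN0 i _ hx _ hy]
  · rw [hM1 _ ht _ hy, hN1 _ ht _ hy]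
  · rw [hM2 _ ht _ hx, hN2 _ ht _ hx]
  · rw [hM3 _ ht _ hx, hN3 _ ht _ hx]
  · rw [hM4 _ ht _ hy, hN4 _ ht _ hy]

theorem broadwell_uniqueness_bounded_general (hc : 0 ≤ c) (hτ : τ < τ') (ha : a₁ < b₁)
    (hb : a₂ < b₂) (hM : IsSol c S (Icc τ τ') τ a₁ b₁ a₂ b₂ N0 B1 B2 B3 B4 M)
    (hN : IsSol c S (Icc τ τ') τ a₁ b₁ a₂ b₂ N0 B1 B2 B3 B4 N) (i : Fin 4) :
    ∀ p ∈ PsetT (Icc τ τ') a₁ b₁ a₂ b₂, M i p.1 p.2.1 p.2.2 = N i p.1 p.2.1 p.2.2 := by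
  have hab (j : Fin 3) : ![τ, a₁, a₂] j < ![τ', b₁, b₂] j := by
    fin_cases j
    exacts [hτ, ha, hb]
  have heq : EqOn (densityVector M) (densityVector N) (Icc ![τ, a₁, a₂] ![τ', b₁, b₂]) :=
    hM.isClassicalSolution.eqOn hN.isClassicalSolution
      (locallyLipschitz_broadwellCollision c S) hab (o := 0) (fun _ => rfl)
      fun _ _ hz => hM.densityVector_eq_of_mem_inflow hc hN hz
  rintro ⟨t, x, y⟩ hp
  exact congrFun (heq (mem_Icc_vec3_iff.2 hp : ![t, x, y] ∈ _)) i

end Broadwell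

/-- Uniqueness of classical solutions to the problem `Σ_(τ,τ')`. -/
theorem broadwell_uniqueness_bounded
    (c S τ τ' a₁ b₁ a₂ b₂ : ℝ) (hc : 0 < c) (hS : 0 < S)
    (hτ : τ < τ') (ha : a₁ < b₁) (hb : a₂ < b₂)
    (N0 : Fin 4 → ℝ → ℝ → ℝ) (B1 B2 B3 B4 : ℝ → ℝ → ℝ)
    (hdata : NiceData (Icc τ τ') τ a₁ b₁ a₂ b₂ N0 B1 B2 B3 B4)
    (M N : Fin 4 → ℝ → ℝ → ℝ → ℝ)
    (hM : IsSol c S (Icc τ τ') τ a₁ b₁ a₂ b₂ N0 B1 B2 B3 B4 M)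
    (hN : IsSol c S (Icc τ τ') τ a₁ b₁ a₂ b₂ N0 B1 B2 B3 B4 N) :
    ∀ i : Fin 4, ∀ p ∈ PsetT (Icc τ τ') a₁ b₁ a₂ b₂, M i p.1 p.2.1 p.2.2 = N i p.1 p.2.1 p.2.2 :=
  fun i => broadwell_uniqueness_bounded_general hc.le hτ ha hb hM hN i

end
end

section
/- Let M and N be two classical solutions of the initial-boundary value problem Σ on the unbounded time interval, i.e. 4-tuples of real functions that are continuous on [0,∞)×[a₁,b₁]×[a₂,b₂], possess all first-order partial derivatives on the interior, and satisfy the Broadwell system together with the initial and boundary conditions. Then M = N. -/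
open Set MeasureTheory

noncomputable section

/-!
A classical solution has partial derivatives but need not be differentiable along characteristics,
so the equations cannot be integrated along them. A maximum principle takes the place of this. If a
continuous function `z` on a box attains its maximum at a point off the inflow boundary of a
constant velocity `v`, then each `v j * ∂ⱼ z` is nonnegative there; so if `∑ j, v j * ∂ⱼ z` is
negative, the maximum lies on the inflow boundary.

On a bounded time interval `Icc τ τ'` both solutions are bounded by some `R`, where the collision
term is Lipschitz with constant `K = |2 * c * S| * (4 * R)`. Suppose that
`|M i - N i| ≤ κ * exp (L * (t - τ))` with `L > 2 * K`. Applied to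
`± (M i - N i) - κ / 2 * exp (L * (t - τ))`, the maximum principle yields the same bound with
`κ / 2` in place of `κ`. Iterating gives `M = N`.
-/

section TransportComparison

open Function Matrix

theorem mul_sub_nonpos_of_isMaxOn_Icc {f : ℝ → ℝ} {f' a b x y : ℝ} (hx : x ∈ Icc a b)
    (hy : y ∈ Icc a b) (hmax : IsMaxOn f (Icc a b) x) (hf : HasDerivAt f f' x) :
    (y - x) * f' ≤ 0 := by
  simpa using hmax.localize.hasFDerivWithinAt_nonpos hf.hasDerivWithinAt.hasFDerivWithinAt
    (sub_mem_posTangentConeAt_of_segment_subset ((convex_Icc a b).segment_subset hx hy))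

variable {ι : Type*}

/-- The part of the boundary of the box `Icc a b` through which the constant velocity field `v`
enters the box, that is, where boundary data are prescribed for `v ⬝ᵥ ∇z`. Faces tangent to `v`
are not included. -/
def inflowBoundary (a b v : ι → ℝ) : Set (ι → ℝ) :=
  {x ∈ Icc a b | ∃ j, 0 < v j ∧ x j = a j ∨ v j < 0 ∧ x j = b j}

/-- The lower corner of the part of a box with lower corner `a` lying upstream of `p` for the
velocity `v`; directions in which `v` vanishes are collapsed to `p`. -/
def upstreamLower (a v p : ι → ℝ) (j : ι) : ℝ := if 0 < v j then a j else p j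

/-- The upper corner of the part of a box with upper corner `b` lying upstream of `p` for the
velocity `v`; directions in which `v` vanishes are collapsed to `p`. -/
def upstreamUpper (b v p : ι → ℝ) (j : ι) : ℝ := if v j < 0 then b j else p j

variable {a b v p : ι → ℝ}

theorem Icc_upstream_subset (hp : p ∈ Icc a b) :
    Icc (upstreamLower a v p) (upstreamUpper b v p) ⊆ Icc a b := by
  refine Icc_subset_Icc (fun j => ?_) fun j => ?_
  · unfold upstreamLower
    split_ifs
    exacts [le_rfl, hp.1 j]
  · unfold upstreamUpper
    split_ifs
    exacts [le_rfl, hp.2 j]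

theorem self_mem_Icc_upstream (hp : p ∈ Icc a b) :
    p ∈ Icc (upstreamLower a v p) (upstreamUpper b v p) := by
  refine ⟨fun j => ?_, fun j => ?_⟩
  · unfold upstreamLower
    split_ifs
    exacts [hp.1 j, le_rfl]
  · unfold upstreamUpper
    split_ifs
    exacts [hp.2 j, le_rfl]

theorem inflowBoundary_upstream_subset (hp : p ∈ Icc a b) :
    inflowBoundary (upstreamLower a v p) (upstreamUpper b v p) v ⊆ inflowBoundary a b v := by
  rintro x ⟨hx, j, hj⟩
  refine ⟨Icc_upstream_subset hp hx, j, hj.imp ?_ ?_⟩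
  · exact fun ⟨hv, hxj⟩ => ⟨hv, hxj.trans (if_pos hv)⟩
  · exact fun ⟨hv, hxj⟩ => ⟨hv, hxj.trans (if_pos hv)⟩

theorem Icc_upstream_diff_inflowBoundary_subset (hp : p ∈ univ.pi fun j => Ioo (a j) (b j)) :
    Icc (upstreamLower a v p) (upstreamUpper b v p) \
        inflowBoundary (upstreamLower a v p) (upstreamUpper b v p) v ⊆
      univ.pi fun j => Ioo (a j) (b j) := by
  rintro x ⟨hx, hx_inflow⟩ j -
  have hne : ¬(0 < v j ∧ x j = upstreamLower a v p j ∨ v j < 0 ∧ x j = upstreamUpper b v p j) :=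
    fun hj => hx_inflow ⟨hx, j, hj⟩
  have hlower := hx.1 j
  have hupper := hx.2 j
  obtain ⟨hap, hpb⟩ := hp j (mem_univ j)
  unfold upstreamLower upstreamUpper at *
  exact ⟨by grind, by grind⟩

variable [DecidableEq ι]

theorem update_mem_Icc {x : ι → ℝ} (hx : x ∈ Icc a b) {j : ι} {s : ℝ} (hs : s ∈ Icc (a j) (b j)) :
    update x j s ∈ Icc a b :=
  ⟨le_update_iff.2 ⟨hs.1, fun k _ => hx.1 k⟩, update_le_iff.2 ⟨hs.2, fun k _ => hx.2 k⟩⟩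

variable [Fintype ι] {z : (ι → ℝ) → ℝ} {z' : (ι → ℝ) → ι → ℝ}

theorem dotProduct_nonneg_of_isMaxOn_Icc {x : ι → ℝ} (hx : x ∈ Icc a b \ inflowBoundary a b v)
    (hmax : IsMaxOn z (Icc a b) x)
    (hz' : ∀ j, HasDerivAt (fun s => z (update x j s)) (z' x j) (x j)) :
    0 ≤ v ⬝ᵥ z' x := by
  obtain ⟨hx, hx_inflow⟩ := hx
  refine Finset.sum_nonneg fun j _ => ?_
  have hmax_j : IsMaxOn (fun s => z (update x j s)) (Icc (a j) (b j)) (x j) := fun s hs => by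
    simpa using hmax (update_mem_Icc hx hs)
  have hxj : x j ∈ Icc (a j) (b j) := ⟨hx.1 j, hx.2 j⟩
  have hab : a j ≤ b j := hxj.1.trans hxj.2
  rcases lt_trichotomy (v j) 0 with hv | hv | hv
  · have hlt : x j < b j := hxj.2.lt_of_ne fun h => hx_inflow ⟨hx, j, .inr ⟨hv, h⟩⟩
    have := mul_sub_nonpos_of_isMaxOn_Icc hxj (right_mem_Icc.2 hab) hmax_j (hz' j)
    exact mul_nonneg_of_nonpos_of_nonpos hv.le (nonpos_of_mul_nonpos_right this (sub_pos.2 hlt))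
  · simp [hv]
  · have hlt : a j < x j := hxj.1.lt_of_ne fun h => hx_inflow ⟨hx, j, .inl ⟨hv, h.symm⟩⟩
    have := mul_sub_nonpos_of_isMaxOn_Icc hxj (left_mem_Icc.2 hab) hmax_j (hz' j)
    exact mul_nonneg hv.le (nonneg_of_mul_nonpos_right this (sub_neg.2 hlt))

theorem nonpos_of_dotProduct_neg_off_inflowBoundary (hz : ContinuousOn z (Icc a b))
    (hz' : ∀ x ∈ Icc a b \ inflowBoundary a b v, ∀ j,
      HasDerivAt (fun s => z (update x j s)) (z' x j) (x j))
    (hneg : ∀ x ∈ Icc a b \ inflowBoundary a b v, v ⬝ᵥ z' x < 0)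
    (hinflow : ∀ x ∈ inflowBoundary a b v, z x ≤ 0) {x : ι → ℝ} (hx : x ∈ Icc a b) :
    z x ≤ 0 := by
  obtain ⟨m, hm, hmax⟩ := isCompact_Icc.exists_isMaxOn ⟨x, hx⟩ hz
  have hm_inflow : m ∈ inflowBoundary a b v := by
    by_contra hm'
    exact (hneg m ⟨hm, hm'⟩).not_ge
      (dotProduct_nonneg_of_isMaxOn_Icc ⟨hm, hm'⟩ hmax (hz' m ⟨hm, hm'⟩))
  exact (hmax hx).trans (hinflow m hm_inflow)

-- At an outflow or tangential face nothing is known about `z'`; the box upstream of an interior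
-- point `p` has its outflow faces inside the big box, and its inflow faces on those of the big box.
theorem nonpos_of_dotProduct_neg (hab : ∀ j, a j < b j) (hz : ContinuousOn z (Icc a b))
    (hz' : ∀ x ∈ univ.pi fun j => Ioo (a j) (b j), ∀ j,
      HasDerivAt (fun s => z (update x j s)) (z' x j) (x j))
    (hneg : ∀ x ∈ univ.pi fun j => Ioo (a j) (b j), v ⬝ᵥ z' x < 0)
    (hinflow : ∀ x ∈ inflowBoundary a b v, z x ≤ 0) {x : ι → ℝ} (hx : x ∈ Icc a b) :
    z x ≤ 0 := by
  have hinterior : ∀ p ∈ univ.pi fun j => Ioo (a j) (b j), z p ≤ 0 := fun p hp => by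
    have hpI : p ∈ Icc a b := ⟨fun j => (hp j trivial).1.le, fun j => (hp j trivial).2.le⟩
    have hsub := Icc_upstream_diff_inflowBoundary_subset (v := v) hp
    exact nonpos_of_dotProduct_neg_off_inflowBoundary (hz.mono (Icc_upstream_subset hpI))
      (fun x hx => hz' x (hsub hx)) (fun x hx => hneg x (hsub hx))
      (fun x hx => hinflow x (inflowBoundary_upstream_subset hpI hx)) (self_mem_Icc_upstream hpI)
  have hclosure : closure (univ.pi fun j => Ioo (a j) (b j)) = Icc a b := by
    simp only [closure_pi_set, closure_Ioo (hab _).ne, pi_univ_Icc]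
  exact le_on_closure hinterior (hclosure ▸ hz) continuousOn_const (hclosure ▸ hx)

theorem le_comp_eval_of_dotProduct_lt {φ φ' : ℝ → ℝ} {k : ι} (hab : ∀ j, a j < b j)
    (hz : ContinuousOn z (Icc a b))
    (hz' : ∀ x ∈ univ.pi fun j => Ioo (a j) (b j), ∀ j,
      HasDerivAt (fun s => z (update x j s)) (z' x j) (x j))
    (hφ : ∀ t, HasDerivAt φ (φ' t) t)
    (hlt : ∀ x ∈ univ.pi fun j => Ioo (a j) (b j), v ⬝ᵥ z' x < v k * φ' (x k))
    (hinflow : ∀ x ∈ inflowBoundary a b v, z x ≤ φ (x k)) {x : ι → ℝ} (hx : x ∈ Icc a b) :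
    z x ≤ φ (x k) := by
  have hφ_cont : Continuous φ := continuous_iff_continuousAt.2 fun t => (hφ t).continuousAt
  have hφ_partial (x : ι → ℝ) (j : ι) : HasDerivAt (fun s => φ (update x j s k))
      (Pi.single (M := fun _ => ℝ) k (φ' (x k)) j) (x j) := by
    obtain rfl | hjk := eq_or_ne j k
    · simpa using hφ (x j)
    · simpa [update_of_ne hjk.symm, Pi.single_eq_of_ne hjk] using hasDerivAt_const (x j) (φ (x k))
  refine sub_nonpos.1 <| nonpos_of_dotProduct_neg (v := v) (z := fun x => z x - φ (x k))
    (z' := fun x => z' x - Pi.single k (φ' (x k))) hab (hz.sub (by fun_prop))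
    (fun x hx j => (hz' x hx j).sub (hφ_partial x j)) (fun x hx => ?_)
    (fun x hx => sub_nonpos.2 (hinflow x hx)) hx
  simpa only [dotProduct_sub, dotProduct_single, sub_neg] using hlt x hx

end TransportComparison

theorem abs_mul_sub_mul_le {u u' w w' R d : ℝ} (hu : |u| ≤ R) (hw' : |w'| ≤ R)
    (hdu : |u - u'| ≤ d) (hdw : |w - w'| ≤ d) : |u * w - u' * w'| ≤ 2 * R * d := by
  have hR : 0 ≤ R := (abs_nonneg u).trans hu
  have hd : 0 ≤ d := (abs_nonneg _).trans hdu
  calc |u * w - u' * w'| = |u * (w - w') + (u - u') * w'| := by ring_nf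
    _ ≤ |u| * |w - w'| + |u - u'| * |w'| := by
      simpa only [abs_mul] using abs_add_le (u * (w - w')) ((u - u') * w')
    _ ≤ R * d + d * R := by gcongr
    _ = 2 * R * d := by ring

theorem abs_QQ_sub_QQ_le {c S t x y R d : ℝ} {M N : Fin 4 → ℝ → ℝ → ℝ → ℝ}
    (hM : ∀ i, |M i t x y| ≤ R) (hN : ∀ i, |N i t x y| ≤ R)
    (hd : ∀ i, |M i t x y - N i t x y| ≤ d) :
    |QQ c S M t x y - QQ c S N t x y| ≤ |2 * c * S| * (4 * R) * d := by
  have h₁₂ := abs_mul_sub_mul_le (hM 1) (hN 2) (hd 1) (hd 2)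
  have h₀₃ := abs_mul_sub_mul_le (hM 0) (hN 3) (hd 0) (hd 3)
  rw [QQ, QQ, ← mul_sub, abs_mul, mul_assoc |2 * c * S|]
  gcongr
  rw [sub_sub_sub_comm]
  linarith [abs_sub (M 1 t x y * M 2 t x y - N 1 t x y * N 2 t x y)
    (M 0 t x y * M 3 t x y - N 0 t x y * N 3 t x y)]

theorem abs_sgn4 (i : Fin 4) : |sgn4 i| = 1 := by
  fin_cases i <;> simp [sgn4]

section Coordinates

open Function

/-- A function of time and position read as a function of the vector `![t, x, y]`. -/
def uncurry3 (f : ℝ → ℝ → ℝ → ℝ) (p : Fin 3 → ℝ) : ℝ := f (p 0) (p 1) (p 2)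

/-- The vector of the partial derivatives in `t`, `x` and `y`, at the point `![t, x, y]`. -/
def grad3 (f : ℝ → ℝ → ℝ → ℝ) (p : Fin 3 → ℝ) : Fin 3 → ℝ :=
  ![pdtF f (p 0) (p 1) (p 2), pdxF f (p 0) (p 1) (p 2), pdyF f (p 0) (p 1) (p 2)]

/-- The space-time direction of the characteristics of the `i`-th Broadwell equation. -/
def charDir (c : ℝ) (i : Fin 4) : Fin 3 → ℝ := ![1, spX c i, spY c i]

theorem HasPartials.hasDerivAt_uncurry3_update {f : ℝ → ℝ → ℝ → ℝ} {p : Fin 3 → ℝ}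
    (hf : HasPartials f (p 0, p 1, p 2)) (j : Fin 3) :
    HasDerivAt (fun s => uncurry3 f (update p j s)) (grad3 f p j) (p j) := by
  obtain ⟨ht, hx, hy⟩ := hf
  fin_cases j
  · simpa [uncurry3, grad3, pdtF, update_of_ne] using ht.hasDerivAt
  · simpa [uncurry3, grad3, pdxF, update_of_ne] using hx.hasDerivAt
  · simpa [uncurry3, grad3, pdyF, update_of_ne] using hy.hasDerivAt

variable {τ τ' a₁ b₁ a₂ b₂ : ℝ} {p : Fin 3 → ℝ}

theorem mem_PsetT_Icc_iff :
    (p 0, p 1, p 2) ∈ PsetT (Icc τ τ') a₁ b₁ a₂ b₂ ↔ p ∈ Icc ![τ, a₁, a₂] ![τ', b₁, b₂] := by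
  simp only [PsetT, mem_prod, ← pi_univ_Icc, mem_univ_pi]
  simp [Fin.forall_fin_succ]

theorem mem_interior_PsetT_Icc_iff :
    (p 0, p 1, p 2) ∈ interior (PsetT (Icc τ τ') a₁ b₁ a₂ b₂) ↔
      p ∈ univ.pi fun j => Ioo (![τ, a₁, a₂] j) (![τ', b₁, b₂] j) := by
  simp only [PsetT, interior_prod_eq, interior_Icc, mem_prod, mem_univ_pi]
  simp [Fin.forall_fin_succ]

theorem Cont3.continuousOn_uncurry3 {f : ℝ → ℝ → ℝ → ℝ}
    (hf : Cont3 f (PsetT (Icc τ τ') a₁ b₁ a₂ b₂)) :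
    ContinuousOn (uncurry3 f) (Icc ![τ, a₁, a₂] ![τ', b₁, b₂]) :=
  ContinuousOn.comp (f := fun p : Fin 3 → ℝ => (p 0, p 1, p 2)) hf (by fun_prop)
    fun _ hp => mem_PsetT_Icc_iff.2 hp

theorem face_of_mem_inflowBoundary_charDir {c : ℝ} {i : Fin 4} (hc : 0 < c)
    (hp : p ∈ inflowBoundary ![τ, a₁, a₂] ![τ', b₁, b₂] (charDir c i)) :
    p 0 = τ ∨ i = 0 ∧ p 1 = a₁ ∨ i = 1 ∧ p 2 = a₂ ∨ i = 2 ∧ p 2 = b₂ ∨ i = 3 ∧ p 1 = b₁ := by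
  have hone : ¬(1 : ℝ) < 0 := zero_le_one.not_gt
  obtain ⟨-, hface⟩ := hp
  fin_cases i <;>
    simpa [charDir, spX, spY, hc, hc.not_gt, hone, Fin.exists_fin_succ] using hface

end Coordinates

namespace IsSol

open Filter Matrix Topology

variable {c S τ τ' a₁ b₁ a₂ b₂ : ℝ} {N0 : Fin 4 → ℝ → ℝ → ℝ} {B1 B2 B3 B4 : ℝ → ℝ → ℝ}
  {M N : Fin 4 → ℝ → ℝ → ℝ → ℝ}

theorem mono {T T' : Set ℝ} (hTT' : T' ⊆ T) (hN : IsSol c S T τ a₁ b₁ a₂ b₂ N0 B1 B2 B3 B4 N) :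
    IsSol c S T' τ a₁ b₁ a₂ b₂ N0 B1 B2 B3 B4 N := by
  have hsub : PsetT T' a₁ b₁ a₂ b₂ ⊆ PsetT T a₁ b₁ a₂ b₂ := prod_mono hTT' subset_rfl
  obtain ⟨hcont, hpartials, heq, hinit, h₁, h₂, h₃, h₄⟩ := hN
  exact ⟨fun i => (hcont i).mono hsub, fun i p hp => hpartials i p (interior_mono hsub hp),
    fun i p hp => heq i p (interior_mono hsub hp), hinit, fun t ht => h₁ t (hTT' ht),
    fun t ht => h₂ t (hTT' ht), fun t ht => h₃ t (hTT' ht), fun t ht => h₄ t (hTT' ht)⟩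

theorem charDir_dotProduct_grad3 (hN : IsSol c S (Icc τ τ') τ a₁ b₁ a₂ b₂ N0 B1 B2 B3 B4 N)
    (i : Fin 4) {p : Fin 3 → ℝ}
    (hp : p ∈ univ.pi fun j => Ioo (![τ, a₁, a₂] j) (![τ', b₁, b₂] j)) :
    charDir c i ⬝ᵥ grad3 (N i) p = sgn4 i * QQ c S N (p 0) (p 1) (p 2) := by
  simpa [charDir, grad3, add_assoc] using hN.2.2.1 i _ (mem_interior_PsetT_Icc_iff.2 hp)

theorem eqOn_inflowBoundary (hc : 0 < c)
    (hM : IsSol c S (Icc τ τ') τ a₁ b₁ a₂ b₂ N0 B1 B2 B3 B4 M)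
    (hN : IsSol c S (Icc τ τ') τ a₁ b₁ a₂ b₂ N0 B1 B2 B3 B4 N) (i : Fin 4) :
    EqOn (uncurry3 (M i)) (uncurry3 (N i))
      (inflowBoundary ![τ, a₁, a₂] ![τ', b₁, b₂] (charDir c i)) := by
  obtain ⟨-, -, -, hM_init, hM₁, hM₂, hM₃, hM₄⟩ := hM
  obtain ⟨-, -, -, hN_init, hN₁, hN₂, hN₃, hN₄⟩ := hN
  intro p hp
  obtain ⟨ht, hx, hy⟩ := mem_PsetT_Icc_iff.2 hp.1
  unfold uncurry3
  obtain h | ⟨rfl, h⟩ | ⟨rfl, h⟩ | ⟨rfl, h⟩ | ⟨rfl, h⟩ := face_of_mem_inflowBoundary_charDir hc hp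
  · rw [h, hM_init i _ hx _ hy, hN_init i _ hx _ hy]
  · rw [h, hM₁ _ ht _ hy, hN₁ _ ht _ hy]
  · rw [h, hM₂ _ ht _ hx, hN₂ _ ht _ hx]
  · rw [h, hM₃ _ ht _ hx, hN₃ _ ht _ hx]
  · rw [h, hM₄ _ ht _ hy, hN₄ _ ht _ hy]

theorem exists_abs_uncurry3_le (hN : IsSol c S (Icc τ τ') τ a₁ b₁ a₂ b₂ N0 B1 B2 B3 B4 N) :
    ∃ R > 0, ∀ p ∈ Icc ![τ, a₁, a₂] ![τ', b₁, b₂], ∀ i, |uncurry3 (N i) p| ≤ R := by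
  obtain ⟨R, hR⟩ := isCompact_Icc.exists_bound_of_continuousOn
    (continuousOn_pi.2 fun i => (hN.1 i).continuousOn_uncurry3)
  exact ⟨max R 1, by positivity, fun p hp i =>
    (norm_le_pi_norm (fun i => uncurry3 (N i) p) i).trans ((hR p hp).trans (le_max_left R 1))⟩

theorem sub_le_half {R L κ : ℝ} (hc : 0 < c) (hτ : τ < τ') (ha : a₁ < b₁) (hb : a₂ < b₂)
    (hM : IsSol c S (Icc τ τ') τ a₁ b₁ a₂ b₂ N0 B1 B2 B3 B4 M)
    (hN : IsSol c S (Icc τ τ') τ a₁ b₁ a₂ b₂ N0 B1 B2 B3 B4 N)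
    (hMR : ∀ p ∈ Icc ![τ, a₁, a₂] ![τ', b₁, b₂], ∀ i, |uncurry3 (M i) p| ≤ R)
    (hNR : ∀ p ∈ Icc ![τ, a₁, a₂] ![τ', b₁, b₂], ∀ i, |uncurry3 (N i) p| ≤ R)
    (hL : 2 * (|2 * c * S| * (4 * R)) < L) (hκ : 0 < κ)
    (hd : ∀ p ∈ Icc ![τ, a₁, a₂] ![τ', b₁, b₂], ∀ i,
      |uncurry3 (M i) p - uncurry3 (N i) p| ≤ κ * Real.exp (L * (p 0 - τ)))
    {p : Fin 3 → ℝ} (hp : p ∈ Icc ![τ, a₁, a₂] ![τ', b₁, b₂]) (i : Fin 4) :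
    uncurry3 (M i) p - uncurry3 (N i) p ≤ κ / 2 * Real.exp (L * (p 0 - τ)) := by
  have hφ : ∀ t, HasDerivAt (fun t => κ / 2 * Real.exp (L * (t - τ)))
      (κ / 2 * (Real.exp (L * (t - τ)) * L)) t := fun t => by
    simpa using (((hasDerivAt_id t).sub_const τ).const_mul L).exp.const_mul (κ / 2)
  refine le_comp_eval_of_dotProduct_lt (v := charDir c i) (k := 0)
    (z := fun p => uncurry3 (M i) p - uncurry3 (N i) p)
    (z' := fun p => grad3 (M i) p - grad3 (N i) p) (by simp [Fin.forall_fin_succ, *])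
    ((hM.1 i).continuousOn_uncurry3.sub (hN.1 i).continuousOn_uncurry3) (fun p hp j => ?_) hφ
    (fun p hp => ?_) (fun p hp => ?_) hp
  · have hp' := mem_interior_PsetT_Icc_iff.2 hp
    exact ((hM.2.1 i _ hp').hasDerivAt_uncurry3_update j).sub
      ((hN.2.1 i _ hp').hasDerivAt_uncurry3_update j)
  · have hpI : p ∈ Icc ![τ, a₁, a₂] ![τ', b₁, b₂] :=
      mem_PsetT_Icc_iff.1 (interior_subset (mem_interior_PsetT_Icc_iff.2 hp))
    calc charDir c i ⬝ᵥ (grad3 (M i) p - grad3 (N i) p)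
        = sgn4 i * (QQ c S M (p 0) (p 1) (p 2) - QQ c S N (p 0) (p 1) (p 2)) := by
          rw [dotProduct_sub, hM.charDir_dotProduct_grad3 i hp, hN.charDir_dotProduct_grad3 i hp,
            mul_sub]
      _ ≤ |QQ c S M (p 0) (p 1) (p 2) - QQ c S N (p 0) (p 1) (p 2)| := by
          simpa only [abs_mul, abs_sgn4, one_mul] using le_abs_self (sgn4 i * _)
      _ ≤ |2 * c * S| * (4 * R) * (κ * Real.exp (L * (p 0 - τ))) :=
          abs_QQ_sub_QQ_le (hMR p hpI) (hNR p hpI) (hd p hpI)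
      _ < L / 2 * (κ * Real.exp (L * (p 0 - τ))) := by
          gcongr
          linarith
      _ = charDir c i 0 * (κ / 2 * (Real.exp (L * (p 0 - τ)) * L)) := by
          simp only [charDir, cons_val_zero]
          ring
  · rw [eqOn_inflowBoundary hc hM hN i hp, sub_self]
    positivity

theorem abs_sub_le_div_two_pow (hc : 0 < c) (hτ : τ < τ') (ha : a₁ < b₁) (hb : a₂ < b₂)
    (hM : IsSol c S (Icc τ τ') τ a₁ b₁ a₂ b₂ N0 B1 B2 B3 B4 M)
    (hN : IsSol c S (Icc τ τ') τ a₁ b₁ a₂ b₂ N0 B1 B2 B3 B4 N) :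
    ∃ κ L : ℝ, ∀ n : ℕ, ∀ p ∈ Icc ![τ, a₁, a₂] ![τ', b₁, b₂], ∀ i,
      |uncurry3 (M i) p - uncurry3 (N i) p| ≤ κ / 2 ^ n * Real.exp (L * (p 0 - τ)) := by
  obtain ⟨RM, hRM, hM_le⟩ := hM.exists_abs_uncurry3_le
  obtain ⟨RN, -, hN_le⟩ := hN.exists_abs_uncurry3_le
  set R := max RM RN
  have : 0 < R := lt_max_of_lt_left hRM
  have hMR p hp i := (hM_le p hp i).trans (le_max_left RM RN)
  have hNR p hp i := (hN_le p hp i).trans (le_max_right RM RN)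
  set L := 2 * (|2 * c * S| * (4 * R)) + 1
  refine ⟨2 * R, L, fun n => ?_⟩
  induction n with
  | zero =>
    intro p hp i
    have hexp : 1 ≤ Real.exp (L * (p 0 - τ)) :=
      Real.one_le_exp (mul_nonneg (by positivity) (sub_nonneg.2 (hp.1 0)))
    calc |uncurry3 (M i) p - uncurry3 (N i) p|
        ≤ |uncurry3 (M i) p| + |uncurry3 (N i) p| := abs_sub _ _
      _ ≤ 2 * R / 2 ^ 0 * 1 := by linarith [hMR p hp i, hNR p hp i]
      _ ≤ 2 * R / 2 ^ 0 * Real.exp (L * (p 0 - τ)) := by gcongr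
  | succ n ih =>
    intro p hp i
    have hL : 2 * (|2 * c * S| * (4 * R)) < L := lt_add_one _
    have hκ : 0 < 2 * R / 2 ^ n := by positivity
    have ih' p hp i := abs_sub_comm (uncurry3 (M i) p) _ ▸ ih p hp i
    rw [pow_succ, ← div_div, abs_sub_le_iff]
    exact ⟨sub_le_half hc hτ ha hb hM hN hMR hNR hL hκ ih hp i,
      sub_le_half hc hτ ha hb hN hM hNR hMR hL hκ ih' hp i⟩

theorem eqOn_of_Icc (hc : 0 < c) (hτ : τ < τ') (ha : a₁ < b₁) (hb : a₂ < b₂)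
    (hM : IsSol c S (Icc τ τ') τ a₁ b₁ a₂ b₂ N0 B1 B2 B3 B4 M)
    (hN : IsSol c S (Icc τ τ') τ a₁ b₁ a₂ b₂ N0 B1 B2 B3 B4 N) (i : Fin 4) :
    EqOn (uncurry3 (M i)) (uncurry3 (N i)) (Icc ![τ, a₁, a₂] ![τ', b₁, b₂]) := by
  intro p hp
  obtain ⟨κ, L, hbound⟩ := abs_sub_le_div_two_pow hc hτ ha hb hM hN
  have hlim : Tendsto (fun n : ℕ => κ / 2 ^ n * Real.exp (L * (p 0 - τ))) atTop (𝓝 0) := by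
    simpa using (tendsto_const_nhds.div_atTop
      (tendsto_pow_atTop_atTop_of_one_lt one_lt_two)).mul_const (Real.exp (L * (p 0 - τ)))
  exact sub_eq_zero.1 (abs_nonpos_iff.1 (ge_of_tendsto' hlim fun n => hbound n p hp i))

end IsSol

theorem broadwell_uniqueness_global_general {c S τ a₁ b₁ a₂ b₂ : ℝ} {T : Set ℝ}
    {N0 : Fin 4 → ℝ → ℝ → ℝ} {B1 B2 B3 B4 : ℝ → ℝ → ℝ} {M N : Fin 4 → ℝ → ℝ → ℝ → ℝ}
    (hc : 0 < c) (ha : a₁ < b₁) (hb : a₂ < b₂) (hT : T.OrdConnected) (hτ : IsLeast T τ)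
    (hM : IsSol c S T τ a₁ b₁ a₂ b₂ N0 B1 B2 B3 B4 M)
    (hN : IsSol c S T τ a₁ b₁ a₂ b₂ N0 B1 B2 B3 B4 N) :
    ∀ i : Fin 4, ∀ p ∈ PsetT T a₁ b₁ a₂ b₂, M i p.1 p.2.1 p.2.2 = N i p.1 p.2.1 p.2.2 := by
  rintro i ⟨t, x, y⟩ ⟨ht, hx, hy⟩
  obtain rfl | hlt := (hτ.2 ht).eq_or_lt
  · exact (hM.2.2.2.1 i x hx y hy).trans (hN.2.2.2.1 i x hx y hy).symm
  · have hsub : Icc τ t ⊆ T := hT.out hτ.1 ht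
    have hp : ![t, x, y] ∈ Icc ![τ, a₁, a₂] ![t, b₁, b₂] :=
      mem_PsetT_Icc_iff.1 ⟨right_mem_Icc.2 hlt.le, hx, hy⟩
    exact IsSol.eqOn_of_Icc hc hlt ha hb (hM.mono hsub) (hN.mono hsub) i hp

/-- Uniqueness of classical solutions to the problem `Σ` on the unbounded time interval. -/
theorem broadwell_uniqueness_global
    (c S a₁ b₁ a₂ b₂ : ℝ) (hc : 0 < c) (hS : 0 < S)
    (ha : a₁ < b₁) (hb : a₂ < b₂)
    (N0 : Fin 4 → ℝ → ℝ → ℝ) (B1 B2 B3 B4 : ℝ → ℝ → ℝ)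
    (hdata : NiceData (Ici (0:ℝ)) 0 a₁ b₁ a₂ b₂ N0 B1 B2 B3 B4)
    (M N : Fin 4 → ℝ → ℝ → ℝ → ℝ)
    (hM : IsSol c S (Ici (0:ℝ)) 0 a₁ b₁ a₂ b₂ N0 B1 B2 B3 B4 M)
    (hN : IsSol c S (Ici (0:ℝ)) 0 a₁ b₁ a₂ b₂ N0 B1 B2 B3 B4 N) :
    ∀ i : Fin 4, ∀ p ∈ PsetT (Ici (0:ℝ)) a₁ b₁ a₂ b₂, M i p.1 p.2.1 p.2.2 = N i p.1 p.2.1 p.2.2 := by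
  exact broadwell_uniqueness_global_general hc ha hb ordConnected_Ici isLeast_Ici hM hN

end
end

section
/- Let σ > 2cS. Suppose the 4-tuple N = (N₁,N₂,N₃,N₄) is continuous on 𝒫, possesses all first-order partial derivatives on the interior of 𝒫, and is a fixed point of the operator 𝒯^σ. Then N is a nonnegative classical solution of the problem Σ_{τ,τ'}. -/
open Set MeasureTheory

noncomputable section

/-!
Since `σ ≥ 2cS`, the damping `σ ρ(|M|)|M_i|` dominates the loss part of `±Q(|M|)`, so the sources
`Q_i^σ(|M|)` are nonnegative and `𝒯^σ` has nonnegative values; a fixed point `N` thus satisfies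
`|N| = N`. Differentiating the Duhamel formula along a characteristic, the damping terms on the
two sides then cancel and `±Q(N)` is the derivative of `N_i` along that characteristic.

To read this as the partial differential equation one has to split the directional derivative into
partial derivatives, although `N_i` need not be differentiable in the three variables jointly. As
the derivative along the characteristics is continuous, the mean value inequality makes difference
quotients in that direction converge uniformly in the base point. Moving along the characteristic
and then back along the spatial axis therefore gives the time derivative.
-/

open scoped Topology

section LineDerivative

variable {𝕜 E F : Type*} [RCLike 𝕜] [AddCommGroup E] [Module 𝕜 E]
  [NormedAddCommGroup F] [NormedSpace 𝕜 F] {f : E → F} {p u w : E}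

theorem hasDerivAt_line_of_hasLineDerivAt {f' : F} {r : 𝕜}
    (h : HasLineDerivAt 𝕜 f f' (p + r • u) u) :
    HasDerivAt (fun s : 𝕜 => f (p + s • u)) f' r := by
  have h0 : HasDerivAt (fun s : 𝕜 => f (p + r • u + s • u)) f' (r + -r) := by
    rw [add_neg_cancel]
    exact h
  refine (h0.comp_add_const r (-r)).congr_of_eventuallyEq (.of_forall fun s => ?_)
  simp only [add_assoc, ← add_smul, add_neg_cancel_comm_assoc]

variable [TopologicalSpace E] [ContinuousAdd E] [ContinuousSMul 𝕜 E]

-- The mean value inequality, uniformly along the lines parallel to `u` near `p`.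
theorem hasDerivAt_sub_of_eventually_hasLineDerivAt {D : E → F} (hD : ContinuousAt D p)
    (hu : ∀ᶠ q in 𝓝 p, HasLineDerivAt 𝕜 f (D q) q u) :
    HasDerivAt (fun s : 𝕜 => f (p + s • w + s • u) - f (p + s • w)) (D p) 0 := by
  rw [hasDerivAt_iff_isLittleO_nhds_zero, Asymptotics.isLittleO_iff]
  intro ε hε
  have hnear : ∀ᶠ q in 𝓝 p, HasLineDerivAt 𝕜 f (D q) q u ∧ ‖D q - D p‖ ≤ ε := by
    filter_upwards [hu, hD.eventually (Metric.closedBall_mem_nhds _ hε)] with q hq hDq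
    exact ⟨hq, dist_eq_norm (D q) (D p) ▸ hDq⟩
  have htendsto : Filter.Tendsto (fun z : 𝕜 × 𝕜 => p + z.1 • w + z.2 • u) (𝓝 (0, 0)) (𝓝 p) := by
    have hcont : Continuous fun z : 𝕜 × 𝕜 => p + z.1 • w + z.2 • u := by fun_prop
    simpa using hcont.tendsto (0, 0)
  obtain ⟨δ, hδ, hball⟩ := Metric.eventually_nhds_iff.1 (htendsto.eventually hnear)
  filter_upwards [Metric.ball_mem_nhds (0 : 𝕜) hδ] with s hs
  have hpoint : ∀ r ∈ Metric.closedBall (0 : 𝕜) ‖s‖,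
      HasLineDerivAt 𝕜 f (D (p + s • w + r • u)) (p + s • w + r • u) u ∧
        ‖D (p + s • w + r • u) - D p‖ ≤ ε := fun r hr => by
    rw [mem_closedBall_zero_iff] at hr
    rw [mem_ball_zero_iff] at hs
    refine @hball (s, r) ?_
    simpa [Prod.dist_eq] using ⟨hs, hr.trans_lt hs⟩
  have hderiv : ∀ r ∈ Metric.closedBall (0 : 𝕜) ‖s‖,
      HasDerivWithinAt (fun r : 𝕜 => f (p + s • w + r • u) - r • D p)
        (D (p + s • w + r • u) - D p) (Metric.closedBall 0 ‖s‖) r := fun r hr => by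
    have hlin : HasDerivAt (fun r : 𝕜 => r • D p) (D p) r := by
      simpa using (hasDerivAt_id r).smul_const (D p)
    exact ((hasDerivAt_line_of_hasLineDerivAt (hpoint r hr).1).sub hlin).hasDerivWithinAt
  have hmean := Convex.norm_image_sub_le_of_norm_hasDerivWithin_le hderiv
    (fun r hr => (hpoint r hr).2) (convex_closedBall _ _) (x := 0) (y := s) (by simp) (by simp)
  simpa [sub_right_comm] using hmean

-- A partial replacement for the chain rule when `f` is not assumed differentiable:
-- moving by `s • (u + w)` amounts to moving by `s • w` first and by `s • u` next.
theorem hasLineDerivAt_add_of_continuousAt {D : E → F} {f' : F} (hD : ContinuousAt D p)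
    (hu : ∀ᶠ q in 𝓝 p, HasLineDerivAt 𝕜 f (D q) q u) (hw : HasLineDerivAt 𝕜 f f' p w) :
    HasLineDerivAt 𝕜 f (D p + f') p (u + w) := by
  refine ((hasDerivAt_sub_of_eventually_hasLineDerivAt (w := w) hD hu).add hw).congr_of_eventuallyEq
    (.of_forall fun s => ?_)
  simp only [Pi.add_apply, sub_add_cancel, smul_add, add_assoc, add_comm (s • u)]

end LineDerivative

section Duhamel

variable {E : Type*} [NormedAddCommGroup E] [NormedSpace ℝ E]

/-- The solution of `v' + a v = q`, `v(t₀) = d`, given by the Duhamel formula with integrating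
factor `exp (∫ a)`. -/
def duhamel (a : ℝ → ℝ) (q : ℝ → E) (t₀ : ℝ) (d : E) (t : ℝ) : E :=
  Real.exp (-∫ s in t₀..t, a s) • ((∫ s in t₀..t, Real.exp (∫ r in t₀..s, a r) • q s) + d)

variable {a : ℝ → ℝ} {q : ℝ → E} {t₀ t : ℝ} {d : E} {J : Set ℝ}

theorem duhamel_self : duhamel a q t₀ d t₀ = d := by
  simp [duhamel]

theorem duhamel_nonneg {q : ℝ → ℝ} {d : ℝ} (h : t₀ ≤ t) (hq : ∀ s ∈ Icc t₀ t, 0 ≤ q s)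
    (hd : 0 ≤ d) :
    0 ≤ duhamel a q t₀ d t :=
  smul_nonneg (Real.exp_pos _).le <| add_nonneg
    (intervalIntegral.integral_nonneg h fun s hs => smul_nonneg (Real.exp_pos _).le (hq s hs)) hd

theorem hasDerivAt_integral_of_continuousOn [CompleteSpace E]
    (hint : IntervalIntegrable q volume t₀ t) (hq : ContinuousOn q J) (ht : J ∈ 𝓝 t) :
    HasDerivAt (fun s => ∫ u in t₀..s, q u) (q t) t :=
  intervalIntegral.integral_hasDerivAt_right hint
    ((hq.mono interior_subset).stronglyMeasurableAtFilter isOpen_interior t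
      (mem_interior_iff_mem_nhds.2 ht))
    (hq.continuousAt ht)

theorem hasDerivAt_duhamel [CompleteSpace E] [J.OrdConnected] (ha : ContinuousOn a J)
    (hq : ContinuousOn q J) (ht₀ : t₀ ∈ J) (ht : J ∈ 𝓝 t) :
    HasDerivAt (duhamel a q t₀ d) (q t - a t • duhamel a q t₀ d t) t := by
  have hsub : uIcc t₀ t ⊆ J := OrdConnected.uIcc_subset ‹_› ht₀ (mem_of_mem_nhds ht)
  have hprim : ∀ s ∈ interior J, HasDerivAt (fun s => ∫ r in t₀..s, a r) (a s) s := fun s hs =>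
    hasDerivAt_integral_of_continuousOn
      (ha.mono (OrdConnected.uIcc_subset ‹_› ht₀ (interior_subset hs))).intervalIntegrable
      ha (mem_interior_iff_mem_nhds.1 hs)
  have hint : IntervalIntegrable (fun s => Real.exp (∫ r in t₀..s, a r) • q s) volume t₀ t := by
    have hcont := intervalIntegral.continuousOn_primitive_interval' (μ := volume)
      (ha.mono hsub).intervalIntegrable left_mem_uIcc
    exact (hcont.rexp.smul (hq.mono hsub)).intervalIntegrable
  have hcont : ContinuousOn (fun s => Real.exp (∫ r in t₀..s, a r) • q s) (interior J) :=
    ContinuousOn.smul (ContinuousOn.rexp fun s hs => (hprim s hs).continuousAt.continuousWithinAt)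
      (hq.mono interior_subset)
  have hsource := hasDerivAt_integral_of_continuousOn hint hcont (interior_mem_nhds.2 ht)
  have hfactor := (hprim t (mem_interior_iff_mem_nhds.2 ht)).neg.exp
  refine (hfactor.smul (hsource.add_const d)).congr_deriv ?_
  simp only [duhamel, Pi.neg_apply, smul_smul, ← Real.exp_add, neg_add_cancel, Real.exp_zero,
    one_smul, sub_eq_add_neg, ← neg_smul]
  congr 2
  ring

end Duhamel

section CollisionTerm

variable {c S σ : ℝ}

-- In each equation only the loss part of `±Q` is negative, and it carries the factor `M i`.
theorem neg_rhoA_mul_le_sgn4_mul_QQa (hcS : 0 ≤ 2 * c * S) (i : Fin 4)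
    (M : Fin 4 → ℝ → ℝ → ℝ → ℝ) (t x y : ℝ) :
    -(2 * c * S * (rhoA M t x y * |M i t x y|)) ≤ sgn4 i * QQa c S M t x y := by
  rw [QQa, mul_left_comm (sgn4 i), ← mul_neg]
  refine mul_le_mul_of_nonneg_left ?_ hcS
  have hprod : ∀ j k, 0 ≤ |M j t x y| * |M k t x y| := fun j k => by positivity
  fin_cases i <;> simp only [sgn4, rhoA, Fin.zero_eta, Fin.mk_one, Fin.reduceFinMk,
    Matrix.cons_val]
  · linarith [hprod 0 0, hprod 1 0, hprod 2 0, hprod 1 2]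
  · linarith [hprod 0 1, hprod 1 1, hprod 3 1, hprod 0 3]
  · linarith [hprod 0 2, hprod 2 2, hprod 3 2, hprod 0 3]
  · linarith [hprod 1 3, hprod 2 3, hprod 3 3, hprod 1 2]

theorem Qsig_nonneg (hcS : 0 ≤ 2 * c * S) (hσ : 2 * c * S ≤ σ) (i : Fin 4)
    (M : Fin 4 → ℝ → ℝ → ℝ → ℝ) (t x y : ℝ) : 0 ≤ Qsig c S σ i M t x y := by
  have hρ : 0 ≤ rhoA M t x y * |M i t x y| := by unfold rhoA; positivity
  have hloss := neg_rhoA_mul_le_sgn4_mul_QQa hcS i M t x y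
  have hdamp := mul_le_mul_of_nonneg_right hσ hρ
  rw [Qsig, mul_assoc]
  linarith

theorem Qsig_sub_eq_sgn4_mul_QQ {M : Fin 4 → ℝ → ℝ → ℝ → ℝ} {t x y : ℝ}
    (hM : ∀ j, 0 ≤ M j t x y) (i : Fin 4) :
    Qsig c S σ i M t x y - σ * rhoA M t x y * M i t x y = sgn4 i * QQ c S M t x y := by
  simp only [Qsig, QQa, QQ, abs_of_nonneg (hM _), add_sub_cancel_left]

variable {M : Fin 4 → ℝ → ℝ → ℝ → ℝ} {D : Set (ℝ × ℝ × ℝ)}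

theorem cont3_QQ (hM : ∀ i, Cont3 (M i) D) : Cont3 (QQ c S M) D :=
  continuousOn_const.mul (((hM 1).mul (hM 2)).sub ((hM 0).mul (hM 3)))

theorem cont3_rhoA (hM : ∀ i, Cont3 (M i) D) : Cont3 (rhoA M) D :=
  (((hM 0).abs.add (hM 1).abs).add (hM 2).abs).add (hM 3).abs

theorem cont3_Qsig (hM : ∀ i, Cont3 (M i) D) (i : Fin 4) : Cont3 (Qsig c S σ i M) D :=
  ((continuousOn_const.mul (cont3_rhoA hM)).mul (hM i).abs).add
    (continuousOn_const.mul (cont3_QQ (M := fun j t x y => |M j t x y|) fun j => (hM j).abs))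

end CollisionTerm

section Characteristics

/-- The point at time `s` of the `i`-th characteristic line through `p`, written so that it
matches the arguments of the integrands in `duh`. -/
def characteristic (c : ℝ) (i : Fin 4) (p : ℝ × ℝ × ℝ) (s : ℝ) : ℝ × ℝ × ℝ :=
  (s, p.2.1 + spX c i * (s - p.1), p.2.2 + spY c i * (s - p.1))

/-- The distance from `p` to the side of the rectangle through which the `i`-th
characteristics enter. -/
def inflowDist (a₁ b₁ a₂ b₂ : ℝ) (i : Fin 4) (p : ℝ × ℝ × ℝ) : ℝ :=
  ![p.2.1 - a₁, p.2.2 - a₂, b₂ - p.2.2, b₁ - p.2.1] i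

/-- The time at which the `i`-th characteristic through `p` enters `[τ, ∞) × [a₁,b₁] × [a₂,b₂]`:
either `τ` or the time of crossing the inflow side, whichever is later. -/
def entryTime (c τ a₁ b₁ a₂ b₂ : ℝ) (i : Fin 4) (p : ℝ × ℝ × ℝ) : ℝ :=
  max τ (p.1 - inflowDist a₁ b₁ a₂ b₂ i p / c)

/-- The point at which the `i`-th characteristic through `p` enters the space-time domain. -/
def entryPoint (c τ a₁ b₁ a₂ b₂ : ℝ) (i : Fin 4) (p : ℝ × ℝ × ℝ) : ℝ × ℝ × ℝ :=
  characteristic c i p (entryTime c τ a₁ b₁ a₂ b₂ i p)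

/-- The boundary datum of the `i`-th density, `N₁⁻`, `N₂⁻`, `N₃⁺` or `N₄⁺`, as a function of
space-time points. -/
def inflowDatum (B1 B2 B3 B4 : ℝ → ℝ → ℝ) (i : Fin 4) (p : ℝ × ℝ × ℝ) : ℝ :=
  ![B1 p.1 p.2.2, B2 p.1 p.2.1, B3 p.1 p.2.1, B4 p.1 p.2.2] i

/-- The initial and boundary data of the `i`-th density glued into one function, to be evaluated
at entry points; the initial datum is used up to time `τ`. -/
def entryDatum (τ : ℝ) (N0 : Fin 4 → ℝ → ℝ → ℝ) (B1 B2 B3 B4 : ℝ → ℝ → ℝ) (i : Fin 4)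
    (p : ℝ × ℝ × ℝ) : ℝ :=
  if p.1 ≤ τ then N0 i p.2.1 p.2.2 else inflowDatum B1 B2 B3 B4 i p

variable {c τ τ' a₁ b₁ a₂ b₂ : ℝ} {i : Fin 4} {p : ℝ × ℝ × ℝ}

theorem characteristic_self (c : ℝ) (i : Fin 4) (p : ℝ × ℝ × ℝ) :
    characteristic c i p p.1 = p := by
  simp [characteristic]

theorem characteristic_characteristic (c : ℝ) (i : Fin 4) (p : ℝ × ℝ × ℝ) (s r : ℝ) :
    characteristic c i (characteristic c i p s) r = characteristic c i p r := by
  simp only [characteristic, Prod.mk.injEq, true_and]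
  constructor <;> ring

theorem characteristic_add (c : ℝ) (i : Fin 4) (p : ℝ × ℝ × ℝ) (r : ℝ) :
    characteristic c i p (p.1 + r) = p + r • (1, spX c i, spY c i) := by
  ext <;> simp [characteristic, mul_comm]

theorem continuous_characteristic (c : ℝ) (i : Fin 4) (p : ℝ × ℝ × ℝ) :
    Continuous (characteristic c i p) := by
  unfold characteristic
  fun_prop

theorem characteristic_eq_lineMap (c : ℝ) (i : Fin 4) (p : ℝ × ℝ × ℝ) :
    characteristic c i p =
      AffineMap.lineMap (k := ℝ) (characteristic c i p 0) (characteristic c i p 1) := by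
  ext s <;> simp only [characteristic, AffineMap.lineMap_apply, vsub_eq_sub, vadd_eq_add,
    Prod.fst_add, Prod.snd_add, Prod.smul_fst, Prod.smul_snd, Prod.fst_sub, Prod.snd_sub,
    smul_eq_mul] <;> ring

theorem ordConnected_preimage_characteristic {P : Set (ℝ × ℝ × ℝ)} (hP : Convex ℝ P) :
    (characteristic c i p ⁻¹' P).OrdConnected := by
  rw [characteristic_eq_lineMap]
  exact (hP.affine_preimage _).ordConnected

theorem inflowDist_characteristic (s : ℝ) :
    inflowDist a₁ b₁ a₂ b₂ i (characteristic c i p s) =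
      inflowDist a₁ b₁ a₂ b₂ i p + c * (s - p.1) := by
  fin_cases i <;>
    simp only [inflowDist, characteristic, spX, spY, Fin.zero_eta, Fin.mk_one, Fin.reduceFinMk,
      Matrix.cons_val] <;>
    ring

theorem entryTime_characteristic (hc : c ≠ 0) (s : ℝ) :
    entryTime c τ a₁ b₁ a₂ b₂ i (characteristic c i p s) =
      entryTime c τ a₁ b₁ a₂ b₂ i p := by
  rw [entryTime, entryTime, inflowDist_characteristic, add_div, mul_div_cancel_left₀ _ hc]
  simp only [characteristic, sub_add_eq_sub_sub_swap, sub_sub_cancel]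

theorem entryPoint_characteristic (hc : c ≠ 0) (s : ℝ) :
    entryPoint c τ a₁ b₁ a₂ b₂ i (characteristic c i p s) =
      entryPoint c τ a₁ b₁ a₂ b₂ i p := by
  simp only [entryPoint, entryTime_characteristic hc, characteristic_characteristic]

theorem entryPoint_eq_self (h : entryTime c τ a₁ b₁ a₂ b₂ i p = p.1) :
    entryPoint c τ a₁ b₁ a₂ b₂ i p = p := by
  rw [entryPoint, h, characteristic_self]

theorem inflowDist_nonneg {T : Set ℝ} (hp : p ∈ PsetT T a₁ b₁ a₂ b₂) :
    0 ≤ inflowDist a₁ b₁ a₂ b₂ i p := by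
  obtain ⟨-, ⟨hx, hx'⟩, hy, hy'⟩ := hp
  fin_cases i <;> simpa [inflowDist]

theorem entryTime_le (hc : 0 ≤ c) (hp : p ∈ PsetT (Icc τ τ') a₁ b₁ a₂ b₂) :
    entryTime c τ a₁ b₁ a₂ b₂ i p ≤ p.1 :=
  max_le hp.1.1 (sub_le_self _ (div_nonneg (inflowDist_nonneg hp) hc))

theorem entryTime_eq_of_initial (hc : 0 ≤ c) (hp : p ∈ PsetT (Icc τ τ') a₁ b₁ a₂ b₂)
    (hpτ : p.1 = τ) : entryTime c τ a₁ b₁ a₂ b₂ i p = p.1 :=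
  (entryTime_le hc hp).antisymm (hpτ.le.trans (le_max_left _ _))

theorem entryTime_eq_of_inflow (hp : τ ≤ p.1) (h : inflowDist a₁ b₁ a₂ b₂ i p = 0) :
    entryTime c τ a₁ b₁ a₂ b₂ i p = p.1 := by
  simp [entryTime, h, hp]

theorem entryPoint_mem (hc : 0 < c) (hp : p ∈ PsetT (Icc τ τ') a₁ b₁ a₂ b₂) :
    entryPoint c τ a₁ b₁ a₂ b₂ i p ∈ PsetT (Icc τ τ') a₁ b₁ a₂ b₂ := by
  have hle := entryTime_le (i := i) hc.le hp
  have hτ : τ ≤ entryTime c τ a₁ b₁ a₂ b₂ i p := le_max_left _ _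
  have hback : c * (p.1 - entryTime c τ a₁ b₁ a₂ b₂ i p) ≤ inflowDist a₁ b₁ a₂ b₂ i p := by
    rw [← le_div_iff₀' hc]
    exact sub_le_comm.1 (le_max_right _ _)
  have hdist : 0 ≤ c * (p.1 - entryTime c τ a₁ b₁ a₂ b₂ i p) :=
    mul_nonneg hc.le (sub_nonneg.2 hle)
  rw [entryPoint]
  generalize entryTime c τ a₁ b₁ a₂ b₂ i p = s at *
  obtain ⟨⟨-, ht'⟩, ⟨hx, hx'⟩, hy, hy'⟩ := hp
  refine ⟨⟨hτ, hle.trans ht'⟩, ?_⟩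
  fin_cases i <;>
    simp only [inflowDist, characteristic, spX, spY, Fin.zero_eta, Fin.mk_one, Fin.reduceFinMk,
      Matrix.cons_val] at hback ⊢ <;>
    refine ⟨⟨?_, ?_⟩, ?_, ?_⟩ <;> dsimp only <;> linarith

end Characteristics

section Operator

variable {c S σ τ τ' a₁ b₁ a₂ b₂ : ℝ} {N0 : Fin 4 → ℝ → ℝ → ℝ} {B1 B2 B3 B4 : ℝ → ℝ → ℝ}
  {M : Fin 4 → ℝ → ℝ → ℝ → ℝ} {i : Fin 4} {p : ℝ × ℝ × ℝ}

theorem duh_characteristic (t₀ d s : ℝ) :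
    duh c S σ i M t₀ s (characteristic c i p s).2.1 (characteristic c i p s).2.2 d =
      duhamel (fun r => σ * ↿(rhoA M) (characteristic c i p r))
        (fun r => ↿(Qsig c S σ i M) (characteristic c i p r)) t₀ d s := by
  have hline : ∀ r z v : ℝ, z + v * (s - p.1) + v * (r - s) = z + v * (r - p.1) := fun r z v => by
    ring
  rw [duh, duhamel, smul_eq_mul, mul_comm]
  simp only [characteristic, hline, intervalIntegral.integral_const_mul, smul_eq_mul,
    Function.HasUncurry.uncurry, id]

theorem Tsig_eq_ite :
    Tsig c S σ τ a₁ b₁ a₂ b₂ N0 B1 B2 B3 B4 M i p.1 p.2.1 p.2.2 =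
      if c * (p.1 - τ) ≤ inflowDist a₁ b₁ a₂ b₂ i p then
        duh c S σ i M τ p.1 p.2.1 p.2.2
          (N0 i (characteristic c i p τ).2.1 (characteristic c i p τ).2.2)
      else
        duh c S σ i M (p.1 - inflowDist a₁ b₁ a₂ b₂ i p / c) p.1 p.2.1 p.2.2
          (inflowDatum B1 B2 B3 B4 i
            (characteristic c i p (p.1 - inflowDist a₁ b₁ a₂ b₂ i p / c))) := by
  have hsub : ∀ z : ℝ, z - c * (p.1 - τ) = z + c * (τ - p.1) := fun z => by ring
  have hadd : ∀ z : ℝ, z + c * (p.1 - τ) = z + -c * (τ - p.1) := fun z => by ring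
  fin_cases i <;> simp only [Tsig, inflowDist, inflowDatum, characteristic, spX, spY,
    Fin.zero_eta, Fin.mk_one, Fin.reduceFinMk, Matrix.cons_val, zero_mul, add_zero, ← hsub, ← hadd]
  · exact if_congr le_sub_comm rfl rfl
  · exact if_congr le_sub_comm rfl rfl
  · exact if_congr le_sub_iff_add_le'.symm rfl rfl
  · exact if_congr le_sub_iff_add_le'.symm rfl rfl

theorem Tsig_eq_duh (hc : 0 < c) :
    Tsig c S σ τ a₁ b₁ a₂ b₂ N0 B1 B2 B3 B4 M i p.1 p.2.1 p.2.2 =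
      duh c S σ i M (entryTime c τ a₁ b₁ a₂ b₂ i p) p.1 p.2.1 p.2.2
        (entryDatum τ N0 B1 B2 B3 B4 i (entryPoint c τ a₁ b₁ a₂ b₂ i p)) := by
  have hiff : c * (p.1 - τ) ≤ inflowDist a₁ b₁ a₂ b₂ i p ↔
      p.1 - inflowDist a₁ b₁ a₂ b₂ i p / c ≤ τ := by
    rw [sub_le_comm, le_div_iff₀' hc]
  rw [Tsig_eq_ite, if_congr hiff rfl rfl, entryPoint, entryTime, entryDatum]
  rcases le_or_gt (p.1 - inflowDist a₁ b₁ a₂ b₂ i p / c) τ with h | h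
  · rw [max_eq_left h, if_pos h, if_pos (show (characteristic c i p τ).1 ≤ τ from le_rfl)]
  · rw [max_eq_right h.le, if_neg h.not_ge,
      if_neg (show ¬(characteristic c i p _).1 ≤ τ from h.not_ge)]

theorem Tsig_characteristic (hc : 0 < c) (s : ℝ) :
    ↿(Tsig c S σ τ a₁ b₁ a₂ b₂ N0 B1 B2 B3 B4 M i) (characteristic c i p s) =
      duhamel (fun r => σ * ↿(rhoA M) (characteristic c i p r))
        (fun r => ↿(Qsig c S σ i M) (characteristic c i p r)) (entryTime c τ a₁ b₁ a₂ b₂ i p)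
        (entryDatum τ N0 B1 B2 B3 B4 i (entryPoint c τ a₁ b₁ a₂ b₂ i p)) s := by
  refine (Tsig_eq_duh hc).trans ?_
  rw [entryTime_characteristic hc.ne', entryPoint_characteristic hc.ne']
  exact duh_characteristic _ _ _

theorem Tsig_eq_entryDatum (hc : 0 < c) (h : entryTime c τ a₁ b₁ a₂ b₂ i p = p.1) :
    ↿(Tsig c S σ τ a₁ b₁ a₂ b₂ N0 B1 B2 B3 B4 M i) p = entryDatum τ N0 B1 B2 B3 B4 i p := by
  conv_lhs => rw [← characteristic_self c i p, Tsig_characteristic hc]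
  rw [h, duhamel_self, entryPoint_eq_self h]

theorem entryDatum_nonneg {T : Set ℝ} (hN0 : Nonneg2 (Rect2 a₁ b₁ a₂ b₂) (N0 i))
    (hB : ∀ q ∈ PsetT T a₁ b₁ a₂ b₂, 0 ≤ inflowDatum B1 B2 B3 B4 i q)
    (hp : p ∈ PsetT T a₁ b₁ a₂ b₂) : 0 ≤ entryDatum τ N0 B1 B2 B3 B4 i p := by
  rw [entryDatum]
  split_ifs
  exacts [hN0 p.2 hp.2, hB p hp]

theorem Tsig_nonneg (hc : 0 < c) (hcS : 0 ≤ 2 * c * S) (hσ : 2 * c * S ≤ σ)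
    (hN0 : Nonneg2 (Rect2 a₁ b₁ a₂ b₂) (N0 i))
    (hB : ∀ q ∈ PsetT (Icc τ τ') a₁ b₁ a₂ b₂, 0 ≤ inflowDatum B1 B2 B3 B4 i q)
    (hp : p ∈ PsetT (Icc τ τ') a₁ b₁ a₂ b₂) :
    0 ≤ ↿(Tsig c S σ τ a₁ b₁ a₂ b₂ N0 B1 B2 B3 B4 M i) p := by
  rw [← characteristic_self c i p, Tsig_characteristic hc]
  exact duhamel_nonneg (entryTime_le hc.le hp) (fun s _ => Qsig_nonneg hcS hσ i M _ _ _)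
    (entryDatum_nonneg hN0 hB (entryPoint_mem hc hp))

theorem convex_PsetT : Convex ℝ (PsetT (Icc τ τ') a₁ b₁ a₂ b₂) :=
  (convex_Icc _ _).prod ((convex_Icc _ _).prod (convex_Icc _ _))

theorem hasLineDerivAt_Tsig (hc : 0 < c) (hM : ∀ j, Cont3 (M j) (PsetT (Icc τ τ') a₁ b₁ a₂ b₂))
    (hp : p ∈ interior (PsetT (Icc τ τ') a₁ b₁ a₂ b₂)) :
    HasLineDerivAt ℝ ↿(Tsig c S σ τ a₁ b₁ a₂ b₂ N0 B1 B2 B3 B4 M i)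
      (↿(Qsig c S σ i M) p -
        σ * ↿(rhoA M) p * ↿(Tsig c S σ τ a₁ b₁ a₂ b₂ N0 B1 B2 B3 B4 M i) p)
      p (1, spX c i, spY c i) := by
  set P := PsetT (Icc τ τ') a₁ b₁ a₂ b₂
  set J := characteristic c i p ⁻¹' P
  have : J.OrdConnected := ordConnected_preimage_characteristic convex_PsetT
  have hpJ : J ∈ 𝓝 p.1 := by
    refine (continuous_characteristic c i p).continuousAt.preimage_mem_nhds ?_
    rwa [characteristic_self, ← mem_interior_iff_mem_nhds]
  have hcomp : ∀ {f : ℝ → ℝ → ℝ → ℝ}, Cont3 f P →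
      ContinuousOn (fun s => ↿f (characteristic c i p s)) J := fun hf =>
    ContinuousOn.comp hf (continuous_characteristic c i p).continuousOn (mapsTo_preimage _ _)
  have hduhamel : HasDerivAt _ _ p.1 :=
    hasDerivAt_duhamel (a := fun s => σ * ↿(rhoA M) (characteristic c i p s))
      (q := fun s => ↿(Qsig c S σ i M) (characteristic c i p s))
      (d := entryDatum τ N0 B1 B2 B3 B4 i (entryPoint c τ a₁ b₁ a₂ b₂ i p))
      (continuousOn_const.mul (hcomp (cont3_rhoA hM))) (hcomp (cont3_Qsig hM i))
      (entryPoint_mem hc (interior_subset hp)) hpJ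
  simp only [← Tsig_characteristic hc, characteristic_self, smul_eq_mul] at hduhamel
  rw [← add_zero p.1] at hduhamel
  simpa only [HasLineDerivAt, ← characteristic_add, Tsig_characteristic hc] using
    hduhamel.comp_const_add p.1 0

end Operator

section PartialDerivatives

variable {f : ℝ → ℝ → ℝ → ℝ} {p : ℝ × ℝ × ℝ} {vx vy : ℝ}

theorem HasPartials.hasLineDerivAt (hf : HasPartials f p) :
    HasLineDerivAt ℝ ↿f (pdtF f p.1 p.2.1 p.2.2) p (1, 0, 0) ∧
      HasLineDerivAt ℝ ↿f (pdxF f p.1 p.2.1 p.2.2) p (0, 1, 0) ∧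
      HasLineDerivAt ℝ ↿f (pdyF f p.1 p.2.1 p.2.2) p (0, 0, 1) := by
  have hshift : ∀ {g : ℝ → ℝ} {x : ℝ}, DifferentiableAt ℝ g x →
      HasDerivAt (fun s => g (x + s)) (deriv g x) 0 := fun {g x} hg =>
    HasDerivAt.comp_const_add x 0 (by rw [add_zero]; exact hg.hasDerivAt)
  refine ⟨(hshift hf.1).congr_of_eventuallyEq (.of_forall fun s => ?_),
    (hshift hf.2.1).congr_of_eventuallyEq (.of_forall fun s => ?_),
    (hshift hf.2.2).congr_of_eventuallyEq (.of_forall fun s => ?_)⟩ <;>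
  simp [Function.HasUncurry.uncurry]

theorem HasPartials.hasLineDerivAt_space (hf : HasPartials f p) (hv : vx = 0 ∨ vy = 0) :
    HasLineDerivAt ℝ ↿f (vx * pdxF f p.1 p.2.1 p.2.2 + vy * pdyF f p.1 p.2.1 p.2.2) p
      (0, vx, vy) := by
  obtain ⟨-, hx, hy⟩ := hf.hasLineDerivAt
  rcases hv with rfl | rfl
  · simpa using hy.smul vy
  · simpa using hx.smul vx

theorem HasPartials.transport_eq_of_hasLineDerivAt {D : ℝ × ℝ × ℝ → ℝ} (hf : HasPartials f p)
    (hv : vx = 0 ∨ vy = 0) (hD : ContinuousAt D p)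
    (hline : ∀ᶠ q in 𝓝 p, HasLineDerivAt ℝ ↿f (D q) q (1, vx, vy)) :
    pdtF f p.1 p.2.1 p.2.2 + vx * pdxF f p.1 p.2.1 p.2.2 + vy * pdyF f p.1 p.2.1 p.2.2 = D p := by
  have hspace := (hf.hasLineDerivAt_space hv).smul (-1)
  have htime := hasLineDerivAt_add_of_continuousAt hD hline hspace
  have hdir : ((1, vx, vy) : ℝ × ℝ × ℝ) + (-1 : ℝ) • (0, vx, vy) = (1, 0, 0) := by simp
  rw [hdir] at htime
  rw [add_assoc, hf.hasLineDerivAt.1.unique htime, neg_one_smul, neg_add_cancel_right]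

end PartialDerivatives

section FixedPoint

variable {c S σ τ τ' a₁ b₁ a₂ b₂ : ℝ} {N0 : Fin 4 → ℝ → ℝ → ℝ} {B1 B2 B3 B4 : ℝ → ℝ → ℝ}
  {N : Fin 4 → ℝ → ℝ → ℝ → ℝ} {i : Fin 4} {p : ℝ × ℝ × ℝ}

theorem spX_eq_zero_or_spY_eq_zero (c : ℝ) (i : Fin 4) : spX c i = 0 ∨ spY c i = 0 := by
  fin_cases i <;> simp [spX, spY]

theorem hasLineDerivAt_of_Tsig_eq (hc : 0 < c)
    (hN : ∀ j, Cont3 (N j) (PsetT (Icc τ τ') a₁ b₁ a₂ b₂))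
    (hnonneg : ∀ j, 0 ≤ N j p.1 p.2.1 p.2.2)
    (hfix : ∀ q ∈ PsetT (Icc τ τ') a₁ b₁ a₂ b₂,
      Tsig c S σ τ a₁ b₁ a₂ b₂ N0 B1 B2 B3 B4 N i q.1 q.2.1 q.2.2 = N i q.1 q.2.1 q.2.2)
    (hp : p ∈ interior (PsetT (Icc τ τ') a₁ b₁ a₂ b₂)) :
    HasLineDerivAt ℝ ↿(N i) (sgn4 i * QQ c S N p.1 p.2.1 p.2.2) p (1, spX c i, spY c i) := by
  rw [← Qsig_sub_eq_sgn4_mul_QQ (σ := σ) hnonneg, ← hfix p (interior_subset hp)]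
  refine (hasLineDerivAt_Tsig (N0 := N0) (B1 := B1) (B2 := B2) (B3 := B3) (B4 := B4)
    hc hN hp).congr_of_eventuallyEq ?_
  filter_upwards [mem_interior_iff_mem_nhds.1 hp] with q hq using (hfix q hq).symm

theorem transport_eq_of_Tsig_eq (hc : 0 < c)
    (hN : ∀ j, Cont3 (N j) (PsetT (Icc τ τ') a₁ b₁ a₂ b₂))
    (hnonneg : ∀ j, ∀ q ∈ PsetT (Icc τ τ') a₁ b₁ a₂ b₂, 0 ≤ N j q.1 q.2.1 q.2.2)
    (hfix : ∀ q ∈ PsetT (Icc τ τ') a₁ b₁ a₂ b₂,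
      Tsig c S σ τ a₁ b₁ a₂ b₂ N0 B1 B2 B3 B4 N i q.1 q.2.1 q.2.2 = N i q.1 q.2.1 q.2.2)
    (hp : p ∈ interior (PsetT (Icc τ τ') a₁ b₁ a₂ b₂)) (hdiff : HasPartials (N i) p) :
    pdtF (N i) p.1 p.2.1 p.2.2 + spX c i * pdxF (N i) p.1 p.2.1 p.2.2 +
      spY c i * pdyF (N i) p.1 p.2.1 p.2.2 = sgn4 i * QQ c S N p.1 p.2.1 p.2.2 :=
  hdiff.transport_eq_of_hasLineDerivAt (D := fun q => sgn4 i * QQ c S N q.1 q.2.1 q.2.2)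
    (spX_eq_zero_or_spY_eq_zero c i)
    (continuousAt_const.mul ((cont3_QQ hN).continuousAt (mem_interior_iff_mem_nhds.1 hp)))
    (Filter.eventually_of_mem (isOpen_interior.mem_nhds hp) fun _ hq =>
      hasLineDerivAt_of_Tsig_eq hc hN (fun j => hnonneg j _ (interior_subset hq)) hfix hq)

theorem Tsig_eq_initial (hc : 0 < c) (hp : p ∈ PsetT (Icc τ τ') a₁ b₁ a₂ b₂) (hpτ : p.1 = τ) :
    Tsig c S σ τ a₁ b₁ a₂ b₂ N0 B1 B2 B3 B4 N i p.1 p.2.1 p.2.2 = N0 i p.2.1 p.2.2 :=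
  (Tsig_eq_entryDatum hc (entryTime_eq_of_initial hc.le hp hpτ)).trans (if_pos hpτ.le)

theorem Tsig_eq_inflowDatum (hc : 0 < c) (hp : p ∈ PsetT (Icc τ τ') a₁ b₁ a₂ b₂)
    (hinflow : inflowDist a₁ b₁ a₂ b₂ i p = 0)
    (hcompat : p.1 = τ → N0 i p.2.1 p.2.2 = inflowDatum B1 B2 B3 B4 i p) :
    Tsig c S σ τ a₁ b₁ a₂ b₂ N0 B1 B2 B3 B4 N i p.1 p.2.1 p.2.2 =
      inflowDatum B1 B2 B3 B4 i p := by
  refine (Tsig_eq_entryDatum hc (entryTime_eq_of_inflow hp.1.1 hinflow)).trans ?_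
  rw [entryDatum, ite_eq_right_iff]
  exact fun hpτ => hcompat (hpτ.antisymm hp.1.1)

theorem inflowDatum_nonneg_of_niceData {T : Set ℝ}
    (h : NiceData T τ a₁ b₁ a₂ b₂ N0 B1 B2 B3 B4) (i : Fin 4) (p : ℝ × ℝ × ℝ)
    (hp : p ∈ PsetT T a₁ b₁ a₂ b₂) : 0 ≤ inflowDatum B1 B2 B3 B4 i p := by
  obtain ⟨-, ⟨-, hB1⟩, ⟨-, hB2⟩, ⟨-, hB3⟩, ⟨-, hB4⟩, -⟩ := h
  obtain ⟨ht, hx, hy⟩ := hp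
  fin_cases i
  exacts [hB1 (p.1, p.2.2) ⟨ht, hy⟩, hB2 (p.1, p.2.1) ⟨ht, hx⟩, hB3 (p.1, p.2.1) ⟨ht, hx⟩,
    hB4 (p.1, p.2.2) ⟨ht, hy⟩]

theorem initial_eq_inflowDatum_of_niceData {T : Set ℝ}
    (h : NiceData T τ a₁ b₁ a₂ b₂ N0 B1 B2 B3 B4) (i : Fin 4) (p : ℝ × ℝ × ℝ)
    (hp : p ∈ PsetT T a₁ b₁ a₂ b₂) (hinflow : inflowDist a₁ b₁ a₂ b₂ i p = 0) (hpτ : p.1 = τ) :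
    N0 i p.2.1 p.2.2 = inflowDatum B1 B2 B3 B4 i p := by
  obtain ⟨-, -, -, -, -, h1, h2, h3, h4⟩ := h
  obtain ⟨t, x, y⟩ := p
  obtain ⟨-, hx, hy⟩ := hp
  obtain rfl : t = τ := hpτ
  fin_cases i
  · obtain rfl : x = a₁ := sub_eq_zero.1 hinflow
    exact h1 y hy
  · obtain rfl : y = a₂ := sub_eq_zero.1 hinflow
    exact h2 x hx
  · obtain rfl : b₂ = y := sub_eq_zero.1 hinflow
    exact h3 x hx
  · obtain rfl : b₁ = x := sub_eq_zero.1 hinflow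
    exact h4 y hy

theorem fixedPoint_Tsig_isSolution_general
    (hc : 0 < c) (hS : 0 ≤ S) (hσ : 2 * c * S ≤ σ) (hτ : τ ≤ τ') (ha : a₁ ≤ b₁) (hb : a₂ ≤ b₂)
    (hN0 : ∀ i, Nonneg2 (Rect2 a₁ b₁ a₂ b₂) (N0 i))
    (hB : ∀ i, ∀ p ∈ PsetT (Icc τ τ') a₁ b₁ a₂ b₂, 0 ≤ inflowDatum B1 B2 B3 B4 i p)
    (hcompat : ∀ i, ∀ p ∈ PsetT (Icc τ τ') a₁ b₁ a₂ b₂, inflowDist a₁ b₁ a₂ b₂ i p = 0 →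
      p.1 = τ → N0 i p.2.1 p.2.2 = inflowDatum B1 B2 B3 B4 i p)
    (hcont : ∀ i, Cont3 (N i) (PsetT (Icc τ τ') a₁ b₁ a₂ b₂))
    (hdiff : ∀ i, ∀ p ∈ interior (PsetT (Icc τ τ') a₁ b₁ a₂ b₂), HasPartials (N i) p)
    (hfix : ∀ i : Fin 4, ∀ p ∈ PsetT (Icc τ τ') a₁ b₁ a₂ b₂,
      Tsig c S σ τ a₁ b₁ a₂ b₂ N0 B1 B2 B3 B4 N i p.1 p.2.1 p.2.2 = N i p.1 p.2.1 p.2.2) :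
    IsSol c S (Icc τ τ') τ a₁ b₁ a₂ b₂ N0 B1 B2 B3 B4 N ∧
    ∀ i : Fin 4, ∀ p ∈ PsetT (Icc τ τ') a₁ b₁ a₂ b₂, 0 ≤ N i p.1 p.2.1 p.2.2 := by
  have hnonneg : ∀ i, ∀ p ∈ PsetT (Icc τ τ') a₁ b₁ a₂ b₂, 0 ≤ N i p.1 p.2.1 p.2.2 :=
    fun i p hp => hfix i p hp ▸ Tsig_nonneg hc (by positivity) hσ (hN0 i) (hB i) hp
  have hinflow : ∀ i, ∀ p ∈ PsetT (Icc τ τ') a₁ b₁ a₂ b₂, inflowDist a₁ b₁ a₂ b₂ i p = 0 →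
      N i p.1 p.2.1 p.2.2 = inflowDatum B1 B2 B3 B4 i p := fun i p hp h =>
    (hfix i p hp).symm.trans (Tsig_eq_inflowDatum hc hp h (hcompat i p hp h))
  refine ⟨⟨hcont, hdiff, fun i p hp => ?_, fun i x hx y hy => ?_, fun t ht y hy => ?_,
    fun t ht x hx => ?_, fun t ht x hx => ?_, fun t ht y hy => ?_⟩, hnonneg⟩
  · exact transport_eq_of_Tsig_eq hc hcont hnonneg (hfix i) hp (hdiff i p hp)
  · have hp : (τ, x, y) ∈ PsetT (Icc τ τ') a₁ b₁ a₂ b₂ := ⟨left_mem_Icc.2 hτ, hx, hy⟩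
    exact (hfix i _ hp).symm.trans (Tsig_eq_initial hc hp rfl)
  · exact hinflow 0 (t, a₁, y) ⟨ht, left_mem_Icc.2 ha, hy⟩ (sub_self a₁)
  · exact hinflow 1 (t, x, a₂) ⟨ht, hx, left_mem_Icc.2 hb⟩ (sub_self a₂)
  · exact hinflow 2 (t, x, b₂) ⟨ht, hx, right_mem_Icc.2 hb⟩ (sub_self b₂)
  · exact hinflow 3 (t, b₁, y) ⟨ht, right_mem_Icc.2 ha, hy⟩ (sub_self b₁)

end FixedPoint

/-- A fixed point of `𝒯^σ` (for `σ > 2cS`) is a nonnegative classical solution of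
`Σ_(τ,τ')` (Proposition 1). -/
theorem fixedPoint_Tsig_isSolution
    (c S σ τ τ' a₁ b₁ a₂ b₂ : ℝ) (hc : 0 < c) (hS : 0 < S) (hσ : 2 * c * S < σ)
    (hτ : τ < τ') (ha : a₁ < b₁) (hb : a₂ < b₂)
    (N0 : Fin 4 → ℝ → ℝ → ℝ) (B1 B2 B3 B4 : ℝ → ℝ → ℝ)
    (hdata : NiceData (Icc τ τ') τ a₁ b₁ a₂ b₂ N0 B1 B2 B3 B4)
    (N : Fin 4 → ℝ → ℝ → ℝ → ℝ)
    (hcont : ∀ i, Cont3 (N i) (PsetT (Icc τ τ') a₁ b₁ a₂ b₂))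
    (hdiff : ∀ i, ∀ p ∈ interior (PsetT (Icc τ τ') a₁ b₁ a₂ b₂), HasPartials (N i) p)
    (hfix : ∀ i : Fin 4, ∀ p ∈ PsetT (Icc τ τ') a₁ b₁ a₂ b₂,
      Tsig c S σ τ a₁ b₁ a₂ b₂ N0 B1 B2 B3 B4 N i p.1 p.2.1 p.2.2 = N i p.1 p.2.1 p.2.2) :
    IsSol c S (Icc τ τ') τ a₁ b₁ a₂ b₂ N0 B1 B2 B3 B4 N ∧
    ∀ i : Fin 4, ∀ p ∈ PsetT (Icc τ τ') a₁ b₁ a₂ b₂, 0 ≤ N i p.1 p.2.1 p.2.2 :=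
  fixedPoint_Tsig_isSolution_general hc hS.le hσ.le hτ.le ha.le hb.le (fun i => (hdata.1 i).2)
    (inflowDatum_nonneg_of_niceData hdata) (initial_eq_inflowDatum_of_niceData hdata)
    hcont hdiff hfix

end
end
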